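/- arXiv:2208.14673 — 3 statements merged into one kernel-verified Lean document; each statement's English description precedes it below -/
import Mathlib

section
/- Assume (A1) r has all coordinates strictly positive and (A2) M_{ij} ≤ 0 for all i ≠ j, where M = XᵀX and r = Xᵀy. For each s ≥ 0, let (w(s), z(s)) be the unique solution of the linear complementarity problem w = k − s·r + Mz, w ≥ 0, z ≥ 0, wᵀz = 0. For ε ∈ (0,1) and s ≥ 0, define w_i^{(ε)}(s) = log(θ_i^{(ε)}(s · log(1/ε))) / log ε and z^{(ε)}(s) = ∫₀^s θ^{(ε)}(u · log(1/ε)) du. Then as ε → 0, w^{(ε)}(s) → w(s) and z^{(ε)}(s) → z(s), uniformly for s in compact subsets of [0,∞). -/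
open Matrix

theorem aux_pos_lin (a u b : ℝ → ℝ) (T : ℝ) (hT : 0 ≤ T) (ha : ContinuousOn a (Set.Ici 0))
    (hu : ∀ t ∈ Set.Icc 0 T, HasDerivAt u (u t * a t + b t) t)
    (hb : ∀ t ∈ Set.Icc 0 T, 0 ≤ b t) (h0 : 0 < u 0) : 0 < u T := by
  have hcont : Continuous (fun t => a (max t 0)) := by
    refine ha.comp_continuous (by fun_prop) ?_
    intro x; simp
  set G : ℝ → ℝ := fun t => ∫ x in (0:ℝ)..t, a (max x 0) with hG
  have hGd : ∀ t, HasDerivAt G (a (max t 0)) t := fun t =>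
    intervalIntegral.integral_hasDerivAt_right (hcont.intervalIntegrable _ _)
      hcont.aestronglyMeasurable.stronglyMeasurableAtFilter hcont.continuousAt
  have hq : ∀ t ∈ Set.Icc 0 T, HasDerivAt (fun t => u t * Real.exp (-G t))
      (b t * Real.exp (-G t)) t := by
    intro t ht
    have h1 := (hu t ht).mul ((hGd t).neg.exp)
    have h2 : (u t * a t + b t) * Real.exp (-G t) + u t * (Real.exp (-G t) * -a (max t 0)) =
        b t * Real.exp (-G t) := by
      rw [max_eq_left ht.1]
      ring
    rw [← h2]
    exact h1
  have hm : MonotoneOn (fun t => u t * Real.exp (-G t)) (Set.Icc 0 T) := by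
    apply monotoneOn_of_deriv_nonneg (convex_Icc _ _)
    · intro t ht; exact (hq t ht).continuousAt.continuousWithinAt
    · intro t ht
      exact (hq t (interior_subset ht)).differentiableAt.differentiableWithinAt
    · intro t ht
      have ht' := interior_subset ht
      rw [(hq t ht').deriv]
      exact mul_nonneg (hb t ht') (Real.exp_pos _).le
  have h := hm (Set.left_mem_Icc.2 hT) (Set.right_mem_Icc.2 hT) hT
  have h2 : 0 < u 0 * Real.exp (-G 0) := mul_pos h0 (Real.exp_pos _)
  exact pos_of_mul_pos_left (lt_of_lt_of_le h2 h) (Real.exp_pos _).le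

theorem aux_first_time {d : ℕ} (p : ℝ → Fin d → ℝ)
    (hc : ∀ i, ContinuousOn (fun t => p t i) (Set.Ici 0))
    (h : ∀ T, 0 ≤ T → (∀ t, 0 ≤ t → t < T → ∀ i, 0 < p t i) → (∀ i, 0 ≤ p T i) → ∀ i, 0 < p T i)
    (h0 : ∀ i, 0 < p 0 i) : ∀ T, 0 ≤ T → ∀ i, 0 < p T i := by
  by_contra! hcon
  obtain ⟨T1, hT1, i1, hi1⟩ := hcon
  let S : Set ℝ := ⋃ i, (Set.Ici (0:ℝ) ∩ (fun t => p t i) ⁻¹' Set.Iic 0)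
  have hSc : IsClosed S := isClosed_iUnion_of_finite fun i =>
    (hc i).preimage_isClosed_of_isClosed isClosed_Ici isClosed_Iic
  have hSne : S.Nonempty := ⟨T1, Set.mem_iUnion.2 ⟨i1, hT1, hi1⟩⟩
  have hSb : BddBelow S := ⟨0, by
    intro x hx; obtain ⟨i, hx, _⟩ := Set.mem_iUnion.1 hx; exact hx⟩
  have hmem := hSc.csInf_mem hSne hSb
  set T := sInf S with hTdef
  obtain ⟨i, hT0, hi⟩ := Set.mem_iUnion.1 hmem
  have hT0' : (0:ℝ) ≤ T := hT0
  have hi' : p T i ≤ 0 := hi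
  have hlt : ∀ t, 0 ≤ t → t < T → ∀ j, 0 < p t j := by
    intro t ht htT j
    by_contra! hj
    exact absurd (csInf_le hSb (Set.mem_iUnion.2 ⟨j, ht, hj⟩)) (not_le.2 htT)
  have hTpos : 0 < T := by
    rcases hT0'.eq_or_lt with h' | h'
    · rw [← h'] at hi'; exact absurd (h0 i) (not_lt.2 hi')
    · exact h'
  have hge : ∀ j, 0 ≤ p T j := by
    intro j
    have h1 : Filter.Tendsto (fun t => p t j) (nhdsWithin T (Set.Ico 0 T)) (nhds (p T j)) :=
      ((hc j) T hT0).mono (fun x hx => hx.1)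
    have : (nhdsWithin T (Set.Ico 0 T)).NeBot := by
      rw [← mem_closure_iff_nhdsWithin_neBot, closure_Ico hTpos.ne]
      exact ⟨hT0', le_rfl⟩
    refine ge_of_tendsto h1 ?_
    filter_upwards [self_mem_nhdsWithin] with t ht
    exact (hlt t ht.1 ht.2 j).le
  exact absurd (h T hT0' hlt hge i) (not_lt.2 hi')

theorem aux_coercive {n d : ℕ} (hd : 0 < d) (X : Matrix (Fin n) (Fin d) ℝ) (y : Fin n → ℝ)
    (M : Matrix (Fin d) (Fin d) ℝ) (r : Fin d → ℝ)
    (hM : M = Xᵀ * X) (hr : r = Xᵀ *ᵥ y) (hA1 : ∀ i, 0 < r i)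
    (hA2 : ∀ i j, i ≠ j → M i j ≤ 0) :
    ∃ l > 0, ∀ v : Fin d → ℝ, l * ‖v‖ ^ 2 ≤ v ⬝ᵥ (M *ᵥ v) := by
  have hquad : ∀ v : Fin d → ℝ, v ⬝ᵥ (M *ᵥ v) = (X *ᵥ v) ⬝ᵥ (X *ᵥ v) := by
    intro v
    rw [hM, ← Matrix.mulVec_mulVec, Matrix.dotProduct_mulVec, Matrix.vecMul_transpose]
  have hpos : ∀ v : Fin d → ℝ, v ≠ 0 → 0 < v ⬝ᵥ (M *ᵥ v) := by
    intro v hv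
    have hnn : ∀ v : Fin d → ℝ, 0 ≤ v ⬝ᵥ (M *ᵥ v) := fun v => by
      rw [hquad]; exact Finset.sum_nonneg fun i _ => mul_self_nonneg _
    by_contra! hle
    have habs : (fun i => |v i|) ⬝ᵥ (M *ᵥ (fun i => |v i|)) ≤ v ⬝ᵥ (M *ᵥ v) := by
      simp only [dotProduct, mulVec, Finset.mul_sum]
      refine Finset.sum_le_sum fun i _ => Finset.sum_le_sum fun j _ => ?_
      by_cases hij : i = j
      · subst hij
        have := abs_mul_abs_self (v i)
        exact le_of_eq (by linear_combination M i i * this)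
      · have h1 := hA2 i j hij
        have h2 : v i * v j ≤ |v i| * |v j| := by rw [← abs_mul]; exact le_abs_self _
        nlinarith
    have h0 : (X *ᵥ (fun i => |v i|)) ⬝ᵥ (X *ᵥ (fun i => |v i|)) = 0 := by
      rw [← hquad]
      exact le_antisymm (habs.trans hle) (hnn _)
    have hX0 := dotProduct_self_eq_zero.1 h0
    have hr0 : r ⬝ᵥ (fun i => |v i|) = 0 := by
      rw [hr, Matrix.mulVec_transpose, ← Matrix.dotProduct_mulVec, hX0, dotProduct_zero]
    apply hv
    ext i
    have := (Finset.sum_eq_zero_iff_of_nonneg (fun i _ =>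
      mul_nonneg (hA1 i).le (abs_nonneg (v i)))).1 hr0 i (Finset.mem_univ _)
    rcases mul_eq_zero.1 this with h | h
    · exact absurd h (hA1 i).ne'
    · simpa using h
  have : Nonempty (Fin d) := ⟨⟨0, hd⟩⟩
  have hcomp : IsCompact (Metric.sphere (0 : Fin d → ℝ) 1) := isCompact_sphere _ _
  have hne : (Metric.sphere (0 : Fin d → ℝ) 1).Nonempty :=
    NormedSpace.sphere_nonempty.2 zero_le_one
  have hcont : Continuous (fun v : Fin d → ℝ => v ⬝ᵥ (M *ᵥ v)) := by
    simp only [dotProduct, mulVec]; fun_prop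
  obtain ⟨v0, hv0, hmin⟩ := hcomp.exists_isMinOn hne hcont.continuousOn
  refine ⟨v0 ⬝ᵥ (M *ᵥ v0), hpos _ ?_, ?_⟩
  · rintro rfl; simp at hv0
  · intro v
    by_cases hv : v = 0
    · subst hv; simp
    · have hvn : 0 < ‖v‖ := norm_pos_iff.2 hv
      have hs : (‖v‖⁻¹ • v) ∈ Metric.sphere (0 : Fin d → ℝ) 1 := by
        simp [norm_smul, hvn.ne']
      have h1 := isMinOn_iff.1 hmin _ hs
      simp only [mulVec_smul, smul_dotProduct, dotProduct_smul, smul_eq_mul] at h1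
      calc v0 ⬝ᵥ (M *ᵥ v0) * ‖v‖ ^ 2
          ≤ (‖v‖⁻¹ * (‖v‖⁻¹ * (v ⬝ᵥ (M *ᵥ v)))) * ‖v‖ ^ 2 := by gcongr
        _ = _ := by field_simp

/-- If `v ≥ 0` entries satisfy `v·Mv ≤ s r·v`, then `v` is bounded. -/
theorem aux_bound {d : ℕ} (M : Matrix (Fin d) (Fin d) ℝ) (r v : Fin d → ℝ) (l s : ℝ)
    (hl : 0 < l) (hco : l * ‖v‖ ^ 2 ≤ v ⬝ᵥ (M *ᵥ v)) (hs : 0 ≤ s) (hr : ∀ i, 0 < r i)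
    (h : v ⬝ᵥ (M *ᵥ v) ≤ s * ∑ i, r i * v i) : ‖v‖ ≤ s * ((∑ i, r i) / l) := by
  have h1 : ∑ i, r i * v i ≤ (∑ i, r i) * ‖v‖ := by
    rw [Finset.sum_mul]
    refine Finset.sum_le_sum fun i _ => mul_le_mul_of_nonneg_left ?_ (hr i).le
    exact (le_abs_self _).trans (norm_le_pi_norm v i)
  have h2 : l * ‖v‖ ^ 2 ≤ s * ((∑ i, r i) * ‖v‖) :=
    hco.trans (h.trans (mul_le_mul_of_nonneg_left h1 hs))
  have hR : 0 ≤ ∑ i, r i := Finset.sum_nonneg fun i _ => (hr i).le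
  rcases (norm_nonneg v).eq_or_lt with h0 | h0
  · rw [← h0]; positivity
  · rw [← mul_div_assoc, le_div_iff₀ hl]
    by_contra! hc
    nlinarith

theorem aux_lcp_bound {d : ℕ} (M : Matrix (Fin d) (Fin d) ℝ) (r k z w : Fin d → ℝ) (l s : ℝ)
    (hl : 0 < l) (hco : l * ‖z‖ ^ 2 ≤ z ⬝ᵥ (M *ᵥ z)) (hs : 0 ≤ s) (hr : ∀ i, 0 < r i)
    (hk : ∀ i, 0 < k i) (h1 : ∀ i, w i = k i - s * r i + (M *ᵥ z) i)
    (hz : ∀ i, 0 ≤ z i) (hwz : ∑ i, w i * z i = 0) : ‖z‖ ≤ s * ((∑ i, r i) / l) := by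
  refine aux_bound M r z l s hl hco hs hr ?_
  have : z ⬝ᵥ (M *ᵥ z) = ∑ i, w i * z i - ∑ i, k i * z i + s * ∑ i, r i * z i := by
    rw [Finset.mul_sum, ← Finset.sum_sub_distrib, ← Finset.sum_add_distrib, dotProduct]
    refine Finset.sum_congr rfl fun i _ => ?_
    rw [h1 i]; ring
  rw [this, hwz]
  have : 0 ≤ ∑ i, k i * z i := Finset.sum_nonneg fun i _ => mul_nonneg (hk i).le (hz i)
  linarith

theorem aux_stab {d : ℕ} (M : Matrix (Fin d) (Fin d) ℝ) (r k z w Z W c : Fin d → ℝ)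
    (l s S B L e : ℝ)
    (hco : l * ‖Z - z‖ ^ 2 ≤ (Z - z) ⬝ᵥ (M *ᵥ (Z - z))) (he : 0 ≤ e) (hB : 0 ≤ B) (hL : 0 ≤ L)
    (h1 : ∀ i, w i = k i - s * r i + (M *ᵥ z) i) (hw : ∀ i, 0 ≤ w i)
    (hz : ∀ i, 0 ≤ z i) (hwz : ∑ i, w i * z i = 0) (hzn : ‖z‖ ≤ S * B)
    (H1 : ∀ i, W i = k i - c i * e - s * r i + (M *ᵥ Z) i)
    (HZ : ∀ i, 0 ≤ Z i) (HZn : ‖Z‖ ≤ S * B) (HWZ : ∀ i, W i * Z i ≤ S * e)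
    (HW : ∀ i, -B * e ≤ W i) (hc : ∀ i, |c i| ≤ L) :
    l * ‖Z - z‖ ^ 2 ≤ (d * (S + S * B * B + L * (2 * (S * B)))) * e := by
  refine hco.trans ?_
  have hid : (Z - z) ⬝ᵥ (M *ᵥ (Z - z)) =
      ∑ i, ((Z i - z i) * (W i - w i + c i * e) - w i * z i) := by
    rw [Finset.sum_sub_distrib, hwz, sub_zero, dotProduct, mulVec_sub]
    refine Finset.sum_congr rfl fun i _ => ?_
    rw [H1 i, h1 i]; simp only [Pi.sub_apply]; ring
  rw [hid]
  have : ∀ i ∈ Finset.univ, ((Z i - z i) * (W i - w i + c i * e) - w i * z i) ≤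
      (S + S * B * B + L * (2 * (S * B))) * e := by
    intro i _
    have hzi : z i ≤ S * B := (le_abs_self _).trans ((norm_le_pi_norm z i).trans hzn)
    have hZi : Z i ≤ S * B := (le_abs_self _).trans ((norm_le_pi_norm Z i).trans HZn)
    have a1 := HWZ i
    have a2 : 0 ≤ Z i * w i := mul_nonneg (HZ i) (hw i)
    have a3 : -(z i * W i) ≤ S * B * B * e := by
      have := mul_le_mul_of_nonneg_left (HW i) (hz i)
      have h' : z i * (B * e) ≤ S * B * (B * e) := mul_le_mul_of_nonneg_right hzi (by positivity)
      nlinarith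
    have a4 : (Z i - z i) * c i ≤ L * (2 * (S * B)) := by
      calc (Z i - z i) * c i ≤ |(Z i - z i) * c i| := le_abs_self _
        _ = |c i| * |Z i - z i| := by rw [abs_mul, mul_comm]
        _ ≤ L * (2 * (S * B)) := by
          refine mul_le_mul (hc i) ?_ (abs_nonneg _) hL
          rw [abs_le]; constructor <;> linarith [hz i, HZ i]
    have a5 := mul_le_mul_of_nonneg_right a4 he
    nlinarith
  have := Finset.sum_le_card_nsmul _ _ _ this
  simpa [mul_assoc] using this

theorem aux_W {d : ℕ} (M : Matrix (Fin d) (Fin d) ℝ) (r k z w Z W c : Fin d → ℝ)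
    (s L e : ℝ) (he : 0 ≤ e) (hL : 0 ≤ L)
    (h1 : ∀ i, w i = k i - s * r i + (M *ᵥ z) i)
    (H1 : ∀ i, W i = k i - c i * e - s * r i + (M *ᵥ Z) i)
    (hc : ∀ i, |c i| ≤ L) :
    ‖W - w‖ ≤ L * e + (∑ i, ∑ j, |M i j|) * ‖Z - z‖ := by
  have hS : 0 ≤ (∑ i, ∑ j, |M i j|) := by positivity
  refine (pi_norm_le_iff_of_nonneg (by positivity)).2 fun i => ?_
  have : (W - w) i = - (c i * e) + (M *ᵥ (Z - z)) i := by
    simp only [Pi.sub_apply, H1 i, h1 i, mulVec_sub]; ring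
  rw [this, Real.norm_eq_abs]
  refine (abs_add_le _ _).trans (add_le_add ?_ ?_)
  · rw [abs_neg, abs_mul, abs_of_nonneg he]; exact mul_le_mul_of_nonneg_right (hc i) he
  · have hab : |(M *ᵥ (Z - z)) i| ≤ ∑ j, |M i j * (Z - z) j| := by
      simp only [mulVec, dotProduct]
      exact Finset.abs_sum_le_sum_abs _ _
    calc |(M *ᵥ (Z - z)) i| ≤ ∑ j, |M i j * (Z - z) j| := hab
      _ ≤ ∑ j, |M i j| * ‖Z - z‖ := by
        refine Finset.sum_le_sum fun j _ => ?_
        rw [abs_mul]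
        exact mul_le_mul_of_nonneg_left (norm_le_pi_norm (Z - z) j) (abs_nonneg _)
      _ = (∑ j, |M i j|) * ‖Z - z‖ := by rw [Finset.sum_mul]
      _ ≤ _ := by
        refine mul_le_mul_of_nonneg_right ?_ (norm_nonneg _)
        exact Finset.single_le_sum (f := fun i => ∑ j, |M i j|)
          (fun i _ => by positivity) (Finset.mem_univ i)

/-- Dynamics: positivity and monotonicity. -/
theorem aux_dyn {d : ℕ} (M : Matrix (Fin d) (Fin d) ℝ) (r : Fin d → ℝ)
    (hA2 : ∀ i j, i ≠ j → M i j ≤ 0) (x : ℝ → Fin d → ℝ)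
    (hx0 : ∀ i, 0 < x 0 i) (hp0 : ∀ i, 0 < r i - (M *ᵥ x 0) i)
    (hode : ∀ t ≥ (0 : ℝ), ∀ i,
      HasDerivAt (fun τ => x τ i) (x t i * (r i - (M *ᵥ x t) i)) t) :
    ∀ t ≥ (0:ℝ), ∀ i, 0 < x t i ∧ 0 < r i - (M *ᵥ x t) i := by
  have hxc : ∀ i, ContinuousOn (fun t => x t i) (Set.Ici 0) := fun i t ht =>
    (hode t ht i).continuousAt.continuousWithinAt
  have hpc : ∀ i, ContinuousOn (fun t => r i - (M *ᵥ x t) i) (Set.Ici 0) := by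
    intro i
    simp only [mulVec, dotProduct]
    exact continuousOn_const.sub (continuousOn_finsetSum _ fun j _ => continuousOn_const.mul (hxc j))
  have hpos : ∀ t ≥ (0:ℝ), ∀ i, 0 < x t i := by
    intro t ht i
    refine aux_pos_lin (fun t => r i - (M *ᵥ x t) i) (fun t => x t i) (fun _ => 0) t ht (hpc i)
      ?_ (fun _ _ => le_rfl) (hx0 i)
    intro s hs
    simpa using hode s hs.1 i
  have hp : ∀ t, 0 ≤ t → ∀ i, 0 < r i - (M *ᵥ x t) i := by
    refine aux_first_time (fun t i => r i - (M *ᵥ x t) i) hpc ?_ hp0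
    intro T hT hlt hTge i
    have hge : ∀ t ∈ Set.Icc 0 T, ∀ j, 0 ≤ r j - (M *ᵥ x t) j := by
      intro t ht j
      rcases ht.2.eq_or_lt with h | h
      · rw [h]; exact hTge j
      · exact (hlt t ht.1 h j).le
    refine aux_pos_lin (fun t => - (M i i * x t i)) (fun t => r i - (M *ᵥ x t) i)
      (fun t => ∑ j ∈ Finset.univ.erase i, - M i j * (x t j * (r j - (M *ᵥ x t) j))) T hT
      ((continuousOn_const.mul (hxc i)).neg) ?_ ?_ (hp0 i)
    · intro t ht
      have h1 : HasDerivAt (fun t => r i - ∑ j, M i j * x t j)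
          (-∑ j, M i j * (x t j * (r j - (M *ᵥ x t) j))) t := by
        have := HasDerivAt.fun_sum (u := Finset.univ) (A := fun j t => M i j * x t j)
          (A' := fun j => M i j * (x t j * (r j - (M *ᵥ x t) j))) (x := t)
          (fun j _ => (hode t ht.1 j).const_mul (M i j))
        exact this.const_sub (r i)
      have h2 : (-∑ j, M i j * (x t j * (r j - (M *ᵥ x t) j))) =
          (r i - (M *ᵥ x t) i) * (- (M i i * x t i)) +
          ∑ j ∈ Finset.univ.erase i, - M i j * (x t j * (r j - (M *ᵥ x t) j)) := by
        rw [← Finset.add_sum_erase _ _ (Finset.mem_univ i), neg_add, ← Finset.sum_neg_distrib]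
        simp only [neg_mul]
        ring
      rw [h2] at h1
      exact h1
    · intro t ht
      refine Finset.sum_nonneg fun j hj => ?_
      have := hA2 i j (Finset.ne_of_mem_erase hj).symm
      exact mul_nonneg (by linarith) (mul_nonneg (hpos t ht.1 j).le (hge t ht j))
  exact fun t ht i => ⟨hpos t ht i, hp t ht i⟩

/-- Estimates for the rescaled solution. Here `ell = log (1/ε)`. -/
theorem aux_est {d : ℕ} (M : Matrix (Fin d) (Fin d) ℝ) (r : Fin d → ℝ) (l : ℝ) (hl : 0 < l)
    (hco : ∀ v : Fin d → ℝ, l * ‖v‖ ^ 2 ≤ v ⬝ᵥ (M *ᵥ v)) (hA1 : ∀ i, 0 < r i)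
    (hA2 : ∀ i j, i ≠ j → M i j ≤ 0) (x : ℝ → Fin d → ℝ)
    (hx0 : ∀ i, 0 < x 0 i) (hp0 : ∀ i, 0 < r i - (M *ᵥ x 0) i)
    (hode : ∀ t ≥ (0 : ℝ), ∀ i,
      HasDerivAt (fun τ => x τ i) (x t i * (r i - (M *ᵥ x t) i)) t)
    (ell s : ℝ) (hell : 0 < ell) (hs : 0 ≤ s) (Z : Fin d → ℝ)
    (hZ : ∀ i, Z i = ∫ u in (0:ℝ)..s, x (u * ell) i) :
    (∀ i, 0 < x (s * ell) i) ∧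
    (∀ i, x (s * ell) i ≤ (∑ i, r i) / l) ∧ (∀ i, 0 ≤ Z i) ∧ (∀ i, Z i ≤ s * x (s * ell) i) ∧
    (∀ i, Real.log (x (s * ell) i) = Real.log (x 0 i) + ell * (s * r i - (M *ᵥ Z) i)) := by
  have hdyn := aux_dyn M r hA2 x hx0 hp0 hode
  have hsl : 0 ≤ s * ell := by positivity
  have hmono : ∀ i, MonotoneOn (fun t => x t i) (Set.Ici 0) := by
    intro i
    apply monotoneOn_of_deriv_nonneg (convex_Ici _)
    · intro t ht; exact (hode t ht i).continuousAt.continuousWithinAt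
    · intro t ht
      exact (hode t (interior_subset ht) i).differentiableAt.differentiableWithinAt
    · intro t ht
      have ht' := interior_subset ht
      rw [(hode t ht' i).deriv]
      exact (mul_pos (hdyn t ht' i).1 (hdyn t ht' i).2).le
  have hcont : ∀ i, ContinuousOn (fun u => x (u * ell) i) (Set.uIcc 0 s) := by
    intro i
    rw [Set.uIcc_of_le hs]
    intro u hu
    have : ContinuousAt (fun t => x t i) (u * ell) :=
      (hode (u * ell) (mul_nonneg hu.1 hell.le) i).continuousAt
    exact (ContinuousAt.comp (f := fun u : ℝ => u * ell) (g := fun t => x t i) this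
      (by fun_prop)).continuousWithinAt
  have hint : ∀ i, IntervalIntegrable (fun u => x (u * ell) i) MeasureTheory.volume 0 s :=
    fun i => (hcont i).intervalIntegrable
  refine ⟨fun i => (hdyn _ hsl i).1, ?_, ?_, ?_, ?_⟩
  · intro i
    have := aux_bound M r (x (s * ell)) l 1 hl (hco _) zero_le_one hA1 (by
      rw [one_mul, dotProduct]
      refine Finset.sum_le_sum fun j _ => ?_
      rw [mul_comm]
      exact mul_le_mul_of_nonneg_right (by linarith [(hdyn _ hsl j).2]) (hdyn _ hsl j).1.le)
    rw [one_mul] at this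
    exact (le_abs_self _).trans ((norm_le_pi_norm _ i).trans this)
  · intro i
    rw [hZ]
    exact intervalIntegral.integral_nonneg hs fun u hu =>
      (hdyn _ (mul_nonneg hu.1 hell.le) i).1.le
  · intro i
    rw [hZ]
    have := intervalIntegral.integral_mono_on hs (hint i)
      (intervalIntegrable_const (c := x (s * ell) i)) (fun u hu =>
      hmono i (Set.mem_Ici.2 (mul_nonneg hu.1 hell.le)) (Set.mem_Ici.2 hsl)
        (mul_le_mul_of_nonneg_right hu.2 hell.le))
    simpa using this
  · intro i
    have hd : ∀ u ∈ Set.uIcc 0 s, HasDerivAt (fun u => Real.log (x (u * ell) i))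
        (ell * (r i - ∑ j, M i j * x (u * ell) j)) u := by
      intro u hu
      rw [Set.uIcc_of_le hs] at hu
      have hu0 : 0 ≤ u * ell := mul_nonneg hu.1 hell.le
      have h1 : HasDerivAt (fun u : ℝ => u * ell) ell u := by
        simpa using (hasDerivAt_id u).mul_const ell
      have h2 := (HasDerivAt.comp (h₂ := fun t => x t i) u (hode (u * ell) hu0 i) h1).log
        (hdyn _ hu0 i).1.ne'
      have h3 : x (u * ell) i * (r i - (M *ᵥ x (u * ell)) i) * ell / x (u * ell) i =
          ell * (r i - ∑ j, M i j * x (u * ell) j) := by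
        have := (hdyn _ hu0 i).1.ne'
        simp only [mulVec, dotProduct]
        rw [div_eq_iff this]
        ring
      rw [← h3]
      exact h2
    have hsumint : IntervalIntegrable (fun u => ∑ j, M i j * x (u * ell) j)
        MeasureTheory.volume 0 s := by
      have hfun : (fun u => ∑ j, M i j * x (u * ell) j) =
          ∑ j, fun u => M i j * x (u * ell) j := by
        ext u; simp
      rw [hfun]
      have := IntervalIntegrable.sum Finset.univ (f := fun j u => M i j * x (u * ell) j)
        (fun j _ => (hint j).const_mul (M i j))
      exact this
    have hftc := intervalIntegral.integral_eq_sub_of_hasDerivAt hd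
      ((intervalIntegrable_const.sub hsumint).const_mul ell)
    rw [intervalIntegral.integral_const_mul, intervalIntegral.integral_sub
      intervalIntegrable_const hsumint, intervalIntegral.integral_finsetSum
      (fun j _ => (hint j).const_mul (M i j))] at hftc
    simp only [intervalIntegral.integral_const_mul, ← hZ, intervalIntegral.integral_const,
      sub_zero, smul_eq_mul, zero_mul] at hftc
    simp only [mulVec, dotProduct]
    linarith



/-- Proposition 5: Under (A1) and (A2), let `(w(s), z(s))` solve the LCP
`w = k − s·r + Mz`, `w ≥ 0`, `z ≥ 0`, `wᵀz = 0` for each `s ≥ 0`. Then the rescaled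
logarithmic coordinates `wᵢ^{(ε)}(s) = log θᵢ^{(ε)}(s log(1/ε)) / log ε` and the
integrals `z^{(ε)}(s) = ∫₀^s θ^{(ε)}(u log(1/ε)) du` converge to `w(s)` and `z(s)` as
`ε → 0⁺`, uniformly on compact subsets of `[0, ∞)`. -/
theorem dln_lcp_convergence (n d : ℕ) (hn : 0 < n) (hd : 0 < d)
    (X : Matrix (Fin n) (Fin d) ℝ) (y : Fin n → ℝ)
    (M : Matrix (Fin d) (Fin d) ℝ) (r : Fin d → ℝ)
    (hM : M = Xᵀ * X) (hr : r = Xᵀ *ᵥ y)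
    (hA1 : ∀ i, 0 < r i)
    (hA2 : ∀ i j, i ≠ j → M i j ≤ 0)
    (C k : Fin d → ℝ) (hC : ∀ i, 0 < C i) (hk : ∀ i, 0 < k i)
    (θ : ℝ → ℝ → Fin d → ℝ)
    (hθinit : ∀ ε ∈ Set.Ioc (0 : ℝ) 1, ∀ i, θ ε 0 i = C i * ε ^ k i)
    (hθode : ∀ ε ∈ Set.Ioc (0 : ℝ) 1, ∀ t ≥ (0 : ℝ), ∀ i,
      HasDerivAt (fun τ => θ ε τ i) (θ ε t i * (r i - (M *ᵥ θ ε t) i)) t)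
    (w z : ℝ → Fin d → ℝ)
    (hwz : ∀ s ≥ (0 : ℝ),
      (∀ i, w s i = k i - s * r i + (M *ᵥ z s) i) ∧
      (∀ i, 0 ≤ w s i) ∧ (∀ i, 0 ≤ z s i) ∧ ∑ i, w s i * z s i = 0) :
    ∀ K : Set ℝ, K ⊆ Set.Ici 0 → IsCompact K →
      TendstoUniformlyOn
        (fun ε s => fun i => Real.log (θ ε (s * Real.log (1 / ε)) i) / Real.log ε)
        w (nhdsWithin 0 (Set.Ioi 0)) K ∧
      TendstoUniformlyOn
        (fun ε s => fun i => ∫ u in (0 : ℝ)..s, θ ε (u * Real.log (1 / ε)) i)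
        z (nhdsWithin 0 (Set.Ioi 0)) K := by
  intro K hK hKc
  obtain ⟨l, hl, hco⟩ := aux_coercive hd X y M r hM hr hA1 hA2
  obtain ⟨S, hS0, hKS⟩ : ∃ S : ℝ, 0 ≤ S ∧ ∀ s ∈ K, s ≤ S := by
    obtain ⟨S, hS⟩ := hKc.bddAbove
    exact ⟨max S 0, le_max_right _ _, fun s hs => (hS hs).trans (le_max_left _ _)⟩
  set B : ℝ := (∑ i, r i) / l with hBdef
  have hB : 0 ≤ B := div_nonneg (Finset.sum_nonneg fun i _ => (hA1 i).le) hl.le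
  set L : ℝ := ∑ i, |Real.log (C i)| with hLdef
  have hL : 0 ≤ L := by positivity
  have hcL : ∀ i, |Real.log (C i)| ≤ L := fun i =>
    Finset.single_le_sum (f := fun i => |Real.log (C i)|) (fun i _ => abs_nonneg _)
      (Finset.mem_univ i)
  set D : ℝ := d * (S + S * B * B + L * (2 * (S * B))) with hD
  set Q : ℝ := ∑ i, ∑ j, |M i j| with hQ
  have hQ0 : 0 ≤ Q := by positivity
  -- smallness of initial data
  have hp0 : ∀ᶠ ε in nhdsWithin (0:ℝ) (Set.Ioi 0),
      ∀ i, 0 < r i - (M *ᵥ (fun j => C j * ε ^ k j)) i := by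
    rw [Filter.eventually_all]
    intro i
    have hc : Filter.Tendsto (fun ε : ℝ => r i - ∑ j, M i j * (C j * ε ^ k j))
        (nhdsWithin (0:ℝ) (Set.Ioi 0)) (nhds (r i - ∑ j, M i j * (C j * 0 ^ k j))) := by
      refine tendsto_nhdsWithin_of_tendsto_nhds ?_
      refine tendsto_const_nhds.sub (tendsto_finsetSum _ fun j _ => ?_)
      exact ((Real.continuousAt_rpow_const 0 (k j) (Or.inr (hk j).le)).tendsto.const_mul _).const_mul _
    have h0 : 0 < r i - ∑ j, M i j * (C j * (0:ℝ) ^ k j) := by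
      have : ∀ j, (0:ℝ) ^ k j = 0 := fun j => Real.zero_rpow (hk j).ne'
      simp [this, hA1 i]
    exact hc.eventually (lt_mem_nhds h0)
  have hlt1 : ∀ᶠ ε in nhdsWithin (0:ℝ) (Set.Ioi 0), ε ∈ Set.Ioo (0:ℝ) 1 :=
    Ioo_mem_nhdsGT zero_lt_one
  have hmain : ∀ᶠ ε in nhdsWithin (0:ℝ) (Set.Ioi 0), ∀ s ∈ K,
      ‖(fun i => ∫ u in (0 : ℝ)..s, θ ε (u * Real.log (1 / ε)) i) - z s‖ ≤
        Real.sqrt (D * (Real.log (1 / ε))⁻¹ / l) ∧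
      ‖(fun i => Real.log (θ ε (s * Real.log (1 / ε)) i) / Real.log ε) - w s‖ ≤
        L * (Real.log (1 / ε))⁻¹ + Q * Real.sqrt (D * (Real.log (1 / ε))⁻¹ / l) := by
    filter_upwards [hp0, hlt1] with ε hpε hε s hs
    have hs0 : 0 ≤ s := hK hs
    have hsS : s ≤ S := hKS s hs
    have hε' : ε ∈ Set.Ioc (0:ℝ) 1 := ⟨hε.1, hε.2.le⟩
    have hell : 0 < Real.log (1 / ε) := by
      rw [one_div, Real.log_inv]; linarith [Real.log_neg hε.1 hε.2]
    have hle : Real.log ε = - Real.log (1 / ε) := by rw [one_div, Real.log_inv, neg_neg]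
    have hinit : θ ε 0 = fun j => C j * ε ^ k j := funext (hθinit ε hε')
    have hx0 : ∀ i, 0 < θ ε 0 i := fun i => by
      rw [hinit]; exact mul_pos (hC i) (Real.rpow_pos_of_pos hε.1 _)
    have hlog0 : ∀ i, Real.log (θ ε 0 i) = Real.log (C i) - k i * Real.log (1 / ε) := by
      intro i
      rw [hinit]
      simp only
      rw [Real.log_mul (hC i).ne' (Real.rpow_pos_of_pos hε.1 _).ne', Real.log_rpow hε.1, hle]
      ring
    rw [hle]
    set ell := Real.log (1 / ε) with helldef
    set Z : Fin d → ℝ := fun i => ∫ u in (0 : ℝ)..s, θ ε (u * ell) i with hZdef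
    set W : Fin d → ℝ := fun i => Real.log (θ ε (s * ell) i) / -ell with hWdef
    obtain ⟨e1, e2, e3, e4, e5⟩ := aux_est M r l hl hco hA1 hA2 (θ ε) hx0
      (by rw [hinit]; exact hpε) (hθode ε hε') ell s hell hs0 Z (fun i => rfl)
    obtain ⟨l1, l2, l3, l4⟩ := hwz s hs0
    have he : 0 ≤ ell⁻¹ := by positivity
    have H1 : ∀ i, W i = k i - Real.log (C i) * ell⁻¹ - s * r i + (M *ᵥ Z) i := by
      intro i
      simp only [hWdef]
      rw [e5 i, hlog0 i]
      field_simp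
      ring
    have hzn : ‖z s‖ ≤ S * B :=
      (aux_lcp_bound M r k (z s) (w s) l s hl (hco _) hs0 hA1 hk l1 l3 l4).trans
        (mul_le_mul_of_nonneg_right hsS hB)
    have HZn : ‖Z‖ ≤ S * B := by
      refine (pi_norm_le_iff_of_nonneg (by positivity)).2 fun i => ?_
      rw [Real.norm_eq_abs, abs_of_nonneg (e3 i)]
      exact (e4 i).trans (mul_le_mul hsS (e2 i) (e1 i).le hS0)
    have HW : ∀ i, -B * ell⁻¹ ≤ W i := by
      intro i
      have h1 : Real.log (θ ε (s * ell) i) ≤ B := by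
        linarith [Real.log_le_sub_one_of_pos (e1 i), e2 i]
      have h2 : W i = - Real.log (θ ε (s * ell) i) * ell⁻¹ := by
        simp only [hWdef, div_neg, neg_div, ← div_eq_mul_inv]
      rw [h2]
      exact mul_le_mul_of_nonneg_right (by linarith) he
    have HWZ : ∀ i, W i * Z i ≤ S * ell⁻¹ := by
      intro i
      have h2 : W i = - Real.log (θ ε (s * ell) i) * ell⁻¹ := by
        simp only [hWdef, div_neg, neg_div, ← div_eq_mul_inv]
      have hb : - Real.log (θ ε (s * ell) i) * Z i ≤ S := by
        rcases le_total (- Real.log (θ ε (s * ell) i)) 0 with h | h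
        · exact (mul_nonpos_of_nonpos_of_nonneg h (e3 i)).trans hS0
        · have h3 : - Real.log (θ ε (s * ell) i) * θ ε (s * ell) i ≤ 1 := by
            have h4 := Real.log_le_sub_one_of_pos (inv_pos.2 (e1 i))
            rw [Real.log_inv] at h4
            have h5 := mul_le_mul_of_nonneg_right h4 (e1 i).le
            rw [sub_mul, inv_mul_cancel₀ (e1 i).ne'] at h5
            linarith [e1 i]
          have h6 := mul_le_mul_of_nonneg_left (e4 i) h
          have h7 := mul_le_mul_of_nonneg_left h3 hs0
          nlinarith
      rw [h2]
      calc _ = (- Real.log (θ ε (s * ell) i) * Z i) * ell⁻¹ := by ring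
        _ ≤ S * ell⁻¹ := mul_le_mul_of_nonneg_right hb he
    have hfin := aux_stab M r k (z s) (w s) Z W (fun i => Real.log (C i)) l s S B L ell⁻¹
      (hco _) he hB hL l1 l2 l3 l4 hzn H1 e3 HZn HWZ HW hcL
    have hZb : ‖Z - z s‖ ≤ Real.sqrt (D * ell⁻¹ / l) := by
      refine Real.le_sqrt_of_sq_le ?_
      rw [le_div_iff₀ hl]
      linarith
    refine ⟨hZb, ?_⟩
    have hWb := aux_W M r k (z s) (w s) Z W (fun i => Real.log (C i)) s L ell⁻¹ he hL l1 H1 hcL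
    exact hWb.trans (by gcongr)
  have hinv : Filter.Tendsto (fun ε : ℝ => (Real.log (1 / ε))⁻¹)
      (nhdsWithin (0:ℝ) (Set.Ioi 0)) (nhds 0) := by
    refine Filter.Tendsto.inv_tendsto_atTop ?_
    refine Real.tendsto_log_atTop.comp ?_
    have h := tendsto_inv_nhdsGT_zero (𝕜 := ℝ)
    simp only [← one_div] at h
    exact h
  have hsq : Filter.Tendsto (fun ε : ℝ => Real.sqrt (D * (Real.log (1 / ε))⁻¹ / l))
      (nhdsWithin (0:ℝ) (Set.Ioi 0)) (nhds 0) := by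
    have := ((hinv.const_mul D).div_const l).sqrt
    simpa using this
  have hW : Filter.Tendsto (fun ε : ℝ => L * (Real.log (1 / ε))⁻¹ +
      Q * Real.sqrt (D * (Real.log (1 / ε))⁻¹ / l))
      (nhdsWithin (0:ℝ) (Set.Ioi 0)) (nhds 0) := by
    have := (hinv.const_mul L).add (hsq.const_mul Q)
    simpa using this
  constructor
  · rw [Metric.tendstoUniformlyOn_iff]
    intro η hη
    filter_upwards [hmain, hW.eventually (gt_mem_nhds hη)] with ε h1 h2 s hs
    rw [dist_comm, dist_eq_norm]
    exact (h1 s hs).2.trans_lt h2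
  · rw [Metric.tendstoUniformlyOn_iff]
    intro η hη
    filter_upwards [hmain, hsq.eventually (gt_mem_nhds hη)] with ε h1 h2 s hs
    rw [dist_comm, dist_eq_norm]
    exact (h1 s hs).1.trans_lt h2
end

section
/- Assume (A1) r has all coordinates strictly positive and (A2) M_{ij} ≤ 0 for all i ≠ j, where M = XᵀX and r = Xᵀy. For s > 0, let μ(s) be the unique minimizer over {θ ≥ 0} of f(θ) + (1/s)⟨k, θ⟩ and I(s) = {i : μ_i(s) > 0}. The nondecreasing map s ↦ I(s) has finitely many points of discontinuity s₁,…,s_q ∈ (0,∞). For every s > 0 with s ∉ {s₁,…,s_q}, the solution θ^{(ε)} of the DLN ODE with initial condition θ_i^{(ε)}(0) = C_i ε^{k_i} satisfies θ^{(ε)}(s · log(1/ε)) → θ_*^{(I(s))} as ε → 0, where θ_*^{(I)} is the fixed point with support I given by (θ_*^{(I)})_I = (M_{II})⁻¹ r_I and (θ_*^{(I)})_i = 0 for i ∉ I. Moreover, the convergence is uniform for s in compact subsets of (0,∞) \ {s₁,…,s_q}. -/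
open Matrix

/-- The principal submatrix `M_{II}` of `M` indexed by a subset `I`. -/
def subMat {d : ℕ} (M : Matrix (Fin d) (Fin d) ℝ) (I : Finset (Fin d)) :
    Matrix I I ℝ := fun a b => M a b

/-- The subvector `r_I` of `r` indexed by a subset `I`. -/
def subVec {d : ℕ} (r : Fin d → ℝ) (I : Finset (Fin d)) : I → ℝ :=
  fun a => r a

/-- The fixed point `θ_*^{(I)}` supported on `I`,
with `(θ_*^{(I)})_I = (M_{II})⁻¹ r_I` and zero outside `I`. -/
noncomputable def thetaStar {d : ℕ} (M : Matrix (Fin d) (Fin d) ℝ) (r : Fin d → ℝ)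
    (I : Finset (Fin d)) : Fin d → ℝ :=
  fun i => if h : i ∈ I then ((subMat M I)⁻¹ *ᵥ subVec r I) ⟨i, h⟩ else 0

lemma dln_bound {d : ℕ} (M : Matrix (Fin d) (Fin d) ℝ) (r : Fin d → ℝ) (K : ℝ)
    (hK0 : 0 < K) (hK : ∀ v : Fin d → ℝ, ‖v‖ ^ 2 ≤ K * (v ⬝ᵥ (M *ᵥ v)))
    (hr : ∀ i, 0 < r i) (x : Fin d → ℝ) (c : ℝ) (hc : 0 ≤ c)
    (h : x ⬝ᵥ (M *ᵥ x) ≤ c * ∑ i, r i * x i) : ‖x‖ ≤ K * c * ∑ i, r i := by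
  have h1 : ∑ i, r i * x i ≤ (∑ i, r i) * ‖x‖ := by
    rw [Finset.sum_mul]
    apply Finset.sum_le_sum
    intro i _
    apply mul_le_mul_of_nonneg_left _ (hr i).le
    exact (le_abs_self _).trans (norm_le_pi_norm x i)
  have h2 := hK x
  have h3 : ‖x‖ ^ 2 ≤ (K * c * ∑ i, r i) * ‖x‖ := by
    calc ‖x‖ ^ 2 ≤ K * (x ⬝ᵥ (M *ᵥ x)) := h2
      _ ≤ K * (c * ∑ i, r i * x i) := by gcongr
      _ ≤ K * (c * ((∑ i, r i) * ‖x‖)) := by gcongr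
      _ = _ := by ring
  rcases eq_or_lt_of_le (norm_nonneg x) with h0 | h0
  · rw [← h0]
    have : 0 ≤ ∑ i, r i := Finset.sum_nonneg (fun i _ => (hr i).le)
    positivity
  · nlinarith

lemma dln_stab {d : ℕ} (M : Matrix (Fin d) (Fin d) ℝ) (r k C : Fin d → ℝ) (K : ℝ)
    (hK0 : 0 < K) (hK : ∀ v : Fin d → ℝ, ‖v‖ ^ 2 ≤ K * (v ⬝ᵥ (M *ᵥ v)))
    (hr : ∀ i, 0 < r i) (hk : ∀ i, 0 < k i) (hC : ∀ i, 0 < C i) (s L : ℝ) (hs : 0 < s)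
    (hL : 0 < L) (a A T : Fin d → ℝ) (ha : ∀ i, 0 ≤ a i)
    (hw : ∀ i, s * r i - k i - (M *ᵥ a) i ≤ 0)
    (haw : ∀ i, a i * (s * r i - k i - (M *ᵥ a) i) = 0)
    (hA : ∀ i, 0 ≤ A i) (hT : ∀ i, T i = C i * Real.exp (L * (s * r i - k i - (M *ᵥ A) i)))
    (hAT : ∀ i, A i ≤ s * T i) (hMT : ∀ i, (M *ᵥ T) i ≤ r i) :
    ‖A - a‖ ^ 2 ≤
      K * (s * ∑ i, (C i + (K * ∑ i, r i) * ((K * ∑ i, r i) / C i))) / L := by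
  have hTpos : ∀ i, 0 < T i := fun i => by rw [hT]; have := hC i; positivity
  have hR : 0 ≤ ∑ i, r i := Finset.sum_nonneg (fun i _ => (hr i).le)
  have hTb : ‖T‖ ≤ K * 1 * ∑ i, r i := by
    apply dln_bound M r K hK0 hK hr T 1 zero_le_one
    rw [one_mul, dotProduct]
    apply Finset.sum_le_sum
    intro i _
    nlinarith [hTpos i, hMT i]
  have hab : ‖a‖ ≤ K * s * ∑ i, r i := by
    apply dln_bound M r K hK0 hK hr a s hs.le
    rw [dotProduct, Finset.mul_sum]
    apply Finset.sum_le_sum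
    intro i _
    nlinarith [haw i, mul_nonneg (ha i) (hk i).le]
  rw [mul_one] at hTb
  set B := K * ∑ i, r i with hB
  have hB0 : 0 ≤ B := by positivity
  have hab' : ∀ i, a i ≤ s * B := fun i => by
    have := (le_abs_self _).trans ((norm_le_pi_norm a i).trans hab)
    rw [hB]; linarith
  have hTb' : ∀ i, T i ≤ B := fun i => (le_abs_self _).trans ((norm_le_pi_norm T i).trans hTb)
  refine (hK _).trans ?_
  rw [mul_div_assoc]
  apply mul_le_mul_of_nonneg_left _ hK0.le
  rw [dotProduct, Finset.mul_sum, Finset.sum_div]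
  apply Finset.sum_le_sum
  intro i _
  rw [Matrix.mulVec_sub]
  simp only [Pi.sub_apply]
  set W := s * r i - k i - (M *ᵥ A) i with hW
  set w := s * r i - k i - (M *ᵥ a) i with hw'
  have e1 : (M *ᵥ A) i - (M *ᵥ a) i = w - W := by rw [hW, hw']; ring
  rw [e1]
  have hCi := hC i
  have h1 : W ≤ (B / C i) / L := by
    rw [le_div_iff₀ hL, le_div_iff₀ hCi]
    have := hT i
    have h2 := Real.add_one_le_exp (L * W)
    have h3 := hTb' i
    nlinarith
  have h2 : - (s * C i / L) ≤ A i * W := by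
    rcases le_or_gt 0 W with h | h
    · have : 0 ≤ s * C i / L := by positivity
      have := mul_nonneg (hA i) h
      linarith
    · have h3 : s * T i * W ≤ A i * W := mul_le_mul_of_nonpos_right (hAT i) h.le
      refine le_trans ?_ h3
      rw [hT i, ← neg_div, div_le_iff₀ hL]
      have h4 : -1 ≤ (L * W) * Real.exp (L * W) := by
        have h5 := Real.add_one_le_exp (-(L * W))
        have h6 : Real.exp (-(L * W)) * Real.exp (L * W) = 1 := by
          rw [← Real.exp_add]; simp
        have h7 := Real.exp_pos (L * W)
        nlinarith
      have h5 : 0 < s * C i := by positivity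
      nlinarith
  have h3 : a i * W ≤ s * B * ((B / C i) / L) := by
    have : 0 ≤ (B / C i) / L := by positivity
    calc a i * W ≤ a i * ((B / C i) / L) := mul_le_mul_of_nonneg_left h1 (ha i)
      _ ≤ _ := mul_le_mul_of_nonneg_right (hab' i) this
  have h4 : A i * w ≤ 0 := mul_nonpos_of_nonneg_of_nonpos (hA i) (hw i)
  have h5 := haw i
  have e2 : s * (C i + B * (B / C i)) / L = s * C i / L + s * B * ((B / C i) / L) := by ring
  rw [e2]
  have e3 : (A i - a i) * (w - W) = A i * w - A i * W - a i * w + a i * W := by ring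
  rw [e3]
  linarith

lemma dln_quad (m g q : ℝ) (hm : 0 ≤ m) (hq : 0 ≤ q)
    (h : ∀ τ : ℝ, -m ≤ τ → 0 ≤ τ * g + (1 / 2) * τ ^ 2 * q) : 0 ≤ g ∧ m * g = 0 := by
  have hg : 0 ≤ g := by
    by_contra hg
    push Not at hg
    have h1 := h (-g / (q + 1)) (by
      have : 0 ≤ -g / (q + 1) := div_nonneg (by linarith) (by linarith)
      linarith)
    have hq1 : 0 < q + 1 := by linarith
    have e : -g / (q + 1) * g + (1 / 2) * (-g / (q + 1)) ^ 2 * q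
        = (-g ^ 2 / (q + 1) ^ 2) * (q / 2 + 1) := by field_simp; ring
    rw [e] at h1
    have : 0 < g ^ 2 / (q + 1) ^ 2 := by
      have : 0 < g ^ 2 := by nlinarith
      positivity
    have h2 : -g ^ 2 / (q + 1) ^ 2 = -(g ^ 2 / (q + 1) ^ 2) := by ring
    rw [h2] at h1
    nlinarith
  refine ⟨hg, ?_⟩
  by_contra hne
  have hmg : 0 < m * g := lt_of_le_of_ne (mul_nonneg hm hg) (Ne.symm hne)
  have hm' : 0 < m := lt_of_le_of_ne hm (by rintro rfl; simp at hne)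
  have hg' : 0 < g := by
    rcases hg.lt_or_eq with h | h
    · exact h
    · subst h; simp at hne
  -- choose `τ = - min m (g/(q+1))`
  set u := min m (g / (q + 1)) with hu
  have hq1 : 0 < q + 1 := by linarith
  have hu0 : 0 < u := lt_min hm' (by positivity)
  have h1 := h (-u) (by have := min_le_left m (g / (q + 1)); linarith)
  have h2 : u * (q + 1) ≤ g := by
    rw [← le_div_iff₀ hq1]; exact min_le_right _ _
  have h3 : u * (u * (q + 1)) ≤ u * g := mul_le_mul_of_nonneg_left h2 hu0.le
  have h4 : 0 ≤ u * (u * q) := by positivity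
  nlinarith [mul_pos hu0 hu0]

lemma dln_kkt {n d : ℕ} (y : Fin n → ℝ)
    (M : Matrix (Fin d) (Fin d) ℝ) (r k : Fin d → ℝ) (hsym : Mᵀ = M) (hdiag : ∀ i, 0 ≤ M i i)
    (f : (Fin d → ℝ) → ℝ)
    (hf : ∀ θ : Fin d → ℝ, f θ =
      (1 / 2) * ∑ j, (y j) ^ 2 - ∑ i, r i * θ i + (1 / 2) * ∑ i, θ i * (M *ᵥ θ) i)
    (s : ℝ) (m : Fin d → ℝ) (hm : ∀ i, 0 ≤ m i)
    (h : ∀ θ' : Fin d → ℝ, (∀ i, 0 ≤ θ' i) →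
        f m + (1 / s) * ∑ i, k i * m i ≤ f θ' + (1 / s) * ∑ i, k i * θ' i) (i : Fin d) :
    0 ≤ -r i + (M *ᵥ m) i + (1 / s) * k i ∧
      m i * (-r i + (M *ᵥ m) i + (1 / s) * k i) = 0 := by
  apply dln_quad _ _ (M i i) (hm i) (hdiag i)
  intro τ hτ
  have h1 := h (m + Pi.single i τ) (by
    intro j
    by_cases hj : j = i
    · subst hj; simp; linarith
    · simp [hj, hm j])
  rw [hf, hf] at h1
  have e1 : ∀ c v : Fin d → ℝ, ∑ j, c j * v j = c ⬝ᵥ v := fun c v => rfl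
  rw [e1, e1, e1, e1, e1, e1, Matrix.mulVec_add, dotProduct_add, dotProduct_add, dotProduct_add,
    add_dotProduct, add_dotProduct] at h1
  have e2 : m ⬝ᵥ (M *ᵥ Pi.single i τ) = Pi.single i τ ⬝ᵥ (M *ᵥ m) := by
    rw [Matrix.dotProduct_mulVec, ← Matrix.mulVec_transpose, hsym, dotProduct_comm]
  rw [e2] at h1
  simp only [single_dotProduct, dotProduct_single, Matrix.mulVec_single] at h1
  simp at h1
  simp only [one_div]
  nlinarith

lemma dln_pd {n d : ℕ} (X : Matrix (Fin n) (Fin d) ℝ) (y : Fin n → ℝ)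
    (M : Matrix (Fin d) (Fin d) ℝ) (r : Fin d → ℝ)
    (hM : M = Xᵀ * X) (hr : r = Xᵀ *ᵥ y) (hA1 : ∀ i, 0 < r i)
    (hA2 : ∀ i j, i ≠ j → M i j ≤ 0) :
    ∃ K : ℝ, 0 < K ∧ ∀ v : Fin d → ℝ, ‖v‖ ^ 2 ≤ K * (v ⬝ᵥ (M *ᵥ v)) := by
  have hq : ∀ v : Fin d → ℝ, v ⬝ᵥ (M *ᵥ v) = (X *ᵥ v) ⬝ᵥ (X *ᵥ v) := by
    intro v
    rw [hM, ← Matrix.mulVec_mulVec, Matrix.dotProduct_mulVec, Matrix.vecMul_transpose]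
  have hinj : ∀ v : Fin d → ℝ, X *ᵥ v = 0 → v = 0 := by
    intro v hv
    have h0 : v ⬝ᵥ (M *ᵥ v) = 0 := by rw [hq, hv]; simp
    set u : Fin d → ℝ := fun i => |v i| with hu
    have h1 : u ⬝ᵥ (M *ᵥ u) ≤ v ⬝ᵥ (M *ᵥ v) := by
      simp only [dotProduct, Matrix.mulVec, Finset.mul_sum]
      apply Finset.sum_le_sum
      intro i _
      apply Finset.sum_le_sum
      intro j _
      by_cases hij : i = j
      · subst hij
        simp only [hu]
        have h2 := abs_mul_abs_self (v i)
        have h3 : |v i| * (M i i * |v i|) = M i i * (|v i| * |v i|) := by ring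
        rw [h3, h2]
        exact le_of_eq (by ring)
      · have h2 := hA2 i j hij
        simp only [hu]
        have h3 : v i * v j ≤ |v i| * |v j| := by rw [← abs_mul]; exact le_abs_self _
        nlinarith
    have h2 : X *ᵥ u = 0 := by
      rw [h0, hq] at h1
      have h3 : 0 ≤ (X *ᵥ u) ⬝ᵥ (X *ᵥ u) := Finset.sum_nonneg (fun i _ => mul_self_nonneg _)
      exact dotProduct_self_eq_zero.mp (le_antisymm h1 h3)
    have h3 : r ⬝ᵥ u = 0 := by
      rw [hr, Matrix.mulVec_transpose, ← Matrix.dotProduct_mulVec, h2]; simp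
    rw [dotProduct, Finset.sum_eq_zero_iff_of_nonneg
      (fun i _ => mul_nonneg (hA1 i).le (abs_nonneg _))] at h3
    ext i
    have h4 := h3 i (Finset.mem_univ i)
    have h5 := (hA1 i).ne'
    simpa [hu, h5] using h4
  obtain ⟨K, hK0, hK⟩ := (Matrix.toLin' X).exists_antilipschitzWith (by
    rw [LinearMap.ker_eq_bot']
    intro v hv
    exact hinj v (by simpa using hv))
  refine ⟨(K : ℝ) ^ 2, by positivity, ?_⟩
  intro v
  have h1 := hK.le_mul_dist v 0
  simp only [dist_zero_right, map_zero, Matrix.toLin'_apply] at h1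
  have h2 : ‖X *ᵥ v‖ ^ 2 ≤ v ⬝ᵥ (M *ᵥ v) := by
    rw [hq]
    have h3 : 0 ≤ (X *ᵥ v) ⬝ᵥ (X *ᵥ v) := Finset.sum_nonneg (fun i _ => mul_self_nonneg _)
    have h4 : ‖X *ᵥ v‖ ≤ √((X *ᵥ v) ⬝ᵥ (X *ᵥ v)) := by
      rw [pi_norm_le_iff_of_nonneg (Real.sqrt_nonneg _)]
      intro i
      apply Real.abs_le_sqrt
      rw [pow_two]
      exact Finset.single_le_sum (f := fun i => (X *ᵥ v) i * (X *ᵥ v) i)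
        (fun i _ => mul_self_nonneg _) (Finset.mem_univ i)
    calc ‖X *ᵥ v‖ ^ 2 ≤ √((X *ᵥ v) ⬝ᵥ (X *ᵥ v)) ^ 2 := by gcongr
      _ = _ := Real.sq_sqrt h3
  calc ‖v‖ ^ 2 ≤ (K * ‖X *ᵥ v‖) ^ 2 := by gcongr
    _ = K ^ 2 * ‖X *ᵥ v‖ ^ 2 := by ring
    _ ≤ _ := by gcongr

lemma dln_star {d : ℕ} (M : Matrix (Fin d) (Fin d) ℝ) (r : Fin d → ℝ) (K : ℝ)
    (hK : ∀ v : Fin d → ℝ, ‖v‖ ^ 2 ≤ K * (v ⬝ᵥ (M *ᵥ v))) (I : Finset (Fin d))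
    (v : Fin d → ℝ) (c : ℝ) (hv : ∀ i, i ∉ I → v i = 0)
    (hMv : ∀ i ∈ I, (M *ᵥ v) i = c * r i) : v = c • thetaStar M r I := by
  -- vectors supported on `I` in the kernel of the submatrix vanish
  have hz : ∀ u : Fin d → ℝ, (∀ i, i ∉ I → u i = 0) → (∀ i ∈ I, (M *ᵥ u) i = 0) → u = 0 := by
    intro u h1 h2
    have h3 : u ⬝ᵥ (M *ᵥ u) = 0 := by
      apply Finset.sum_eq_zero
      intro i _
      by_cases hi : i ∈ I
      · rw [h2 i hi, mul_zero]
      · rw [h1 i hi, zero_mul]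
    have h4 := hK u
    rw [h3, mul_zero] at h4
    have h5 : ‖u‖ = 0 := by nlinarith [norm_nonneg u]
    exact norm_eq_zero.mp h5
  have hext : ∀ (z : I → ℝ) (i : I),
      (M *ᵥ (fun j => if h : j ∈ I then z ⟨j, h⟩ else 0)) i = (subMat M I *ᵥ z) i := by
    intro z i
    simp only [Matrix.mulVec, dotProduct, subMat]
    rw [← Finset.sum_subset (Finset.subset_univ I) (by
      intro j _ hj; simp [hj]), ← Finset.sum_coe_sort I]
    apply Finset.sum_congr rfl
    intro j _
    simp
  have hdet : IsUnit (subMat M I).det := by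
    rw [isUnit_iff_ne_zero]
    intro h0
    obtain ⟨z, hz0, hz1⟩ := Matrix.exists_mulVec_eq_zero_iff.mpr h0
    apply hz0
    have := hz (fun j => if h : j ∈ I then z ⟨j, h⟩ else 0) (by intro i hi; simp [hi]) (by
      intro i hi
      have := hext z ⟨i, hi⟩
      rw [hz1] at this
      exact this)
    ext i
    have h1 := congrFun this i
    simpa using h1
  have hst : ∀ i ∈ I, (M *ᵥ thetaStar M r I) i = r i := by
    intro i hi
    have := hext ((subMat M I)⁻¹ *ᵥ subVec r I) ⟨i, hi⟩
    rw [Matrix.mulVec_mulVec, Matrix.mul_nonsing_inv _ hdet, Matrix.one_mulVec] at this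
    exact this
  have := hz (v - c • thetaStar M r I) (by
    intro i hi
    simp [hv i hi, thetaStar, hi]) (by
    intro i hi
    rw [Matrix.mulVec_sub, Matrix.mulVec_smul]
    simp [hMv i hi, hst i hi])
  exact sub_eq_zero.mp this

/-- Time integral of the trajectory. -/
noncomputable def dlnP {d : ℕ} (x : ℝ → Fin d → ℝ) (t : ℝ) : Fin d → ℝ :=
  fun i => ∫ τ in (0 : ℝ)..t, x (max τ 0) i

lemma dln_traj {d : ℕ} (M : Matrix (Fin d) (Fin d) ℝ) (r : Fin d → ℝ)
    (hA2 : ∀ i j, i ≠ j → M i j ≤ 0) (x : ℝ → Fin d → ℝ) (hx0 : ∀ i, 0 < x 0 i)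
    (hg0 : ∀ i, 0 < r i - (M *ᵥ x 0) i)
    (hode : ∀ t ≥ (0 : ℝ), ∀ i,
      HasDerivAt (fun τ => x τ i) (x t i * (r i - (M *ᵥ x t) i)) t) :
    (∀ t ≥ (0 : ℝ), ∀ i, x t i = x 0 i * Real.exp (r i * t - (M *ᵥ dlnP x t) i)) ∧
    (∀ t ≥ (0 : ℝ), ∀ i, 0 ≤ r i - (M *ᵥ x t) i) ∧
    (∀ t ≥ (0 : ℝ), ∀ t' ≥ t, ∀ i, (t' - t) * x t i ≤ dlnP x t' i - dlnP x t i ∧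
      dlnP x t' i - dlnP x t i ≤ (t' - t) * x t' i) := by
  have hcont : ∀ i, Continuous (fun τ => x (max τ 0) i) := by
    intro i
    rw [continuous_iff_continuousAt]
    intro t
    have h1 := (hode (max t 0) (le_max_right _ _) i).continuousAt
    exact ContinuousAt.comp (f := fun τ : ℝ => max τ 0) (g := fun τ => x τ i) h1 (by fun_prop)
  have hP : ∀ t ≥ (0 : ℝ), ∀ i, HasDerivAt (fun τ => dlnP x τ i) (x t i) t := by
    intro t ht i
    have := ((hcont i).integral_hasStrictDerivAt 0 t).hasDerivAt
    simpa [dlnP, max_eq_left ht] using this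
  have hMP : ∀ t ≥ (0 : ℝ), ∀ i, HasDerivAt (fun τ => (M *ᵥ dlnP x τ) i) ((M *ᵥ x t) i) t := by
    intro t ht i
    simp only [Matrix.mulVec, dotProduct]
    exact HasDerivAt.fun_sum (fun j _ => (hP t ht j).const_mul (M i j))
  have hP0 : dlnP x 0 = 0 := by ext i; simp [dlnP]
  have hform : ∀ t ≥ (0 : ℝ), ∀ i,
      x t i = x 0 i * Real.exp (r i * t - (M *ᵥ dlnP x t) i) := by
    intro t ht i
    set F : ℝ → ℝ := fun τ => x τ i * Real.exp (-(r i * τ - (M *ᵥ dlnP x τ) i)) with hF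
    have hFd : ∀ τ ≥ (0 : ℝ), HasDerivAt F 0 τ := by
      intro τ hτ
      have h1 := (((hasDerivAt_id τ).const_mul (r i)).sub (hMP τ hτ i)).neg.exp
      have h2 := (hode τ hτ i).mul h1
      refine h2.congr_deriv ?_
      simp
      ring
    have hc : F t = F 0 := by
      refine constant_of_has_deriv_right_zero (f := F) (a := 0) (b := t) ?_ ?_ t ⟨ht, le_rfl⟩
      · intro τ hτ; exact (hFd τ hτ.1).continuousAt.continuousWithinAt
      · intro τ hτ; exact (hFd τ hτ.1).hasDerivWithinAt
    simp only [hF, hP0] at hc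
    simp at hc
    rw [← hc, mul_assoc, ← Real.exp_add]
    simp
  have hpos : ∀ t ≥ (0 : ℝ), ∀ i, 0 < x t i := by
    intro t ht i
    rw [hform t ht i]
    exact mul_pos (hx0 i) (Real.exp_pos _)
  set g : ℝ → Fin d → ℝ := fun t i => r i - (M *ᵥ x t) i with hg
  have hgd : ∀ t ≥ (0 : ℝ), ∀ i, HasDerivAt (fun τ => g τ i)
      (-∑ j, M i j * (x t j * g t j)) t := by
    intro t ht i
    simp only [hg, Matrix.mulVec, dotProduct]
    have := (HasDerivAt.fun_sum (u := Finset.univ)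
      (fun j _ => (hode t ht j).const_mul (M i j))).const_sub (r i)
    exact this
  have hgpos : ∀ t ≥ (0 : ℝ), ∀ i, 0 < g t i := by
    by_contra hcon
    push Not at hcon
    obtain ⟨t₀, ht₀, i₀, hi₀⟩ := hcon
    set S : Set ℝ := ⋃ i, (Set.Ici 0 ∩ {t | g (max t 0) i ≤ 0}) with hS
    have hScl : IsClosed S := by
      apply isClosed_iUnion_of_finite
      intro i
      apply isClosed_Ici.inter
      apply isClosed_le _ continuous_const
      simp only [hg, Matrix.mulVec, dotProduct]
      exact continuous_const.sub
        (continuous_finsetSum _ (fun j _ => continuous_const.mul (hcont j)))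
    have hSne : S.Nonempty := ⟨t₀, Set.mem_iUnion.mpr ⟨i₀, ht₀, by
      simpa [max_eq_left ht₀] using hi₀⟩⟩
    have hSb : BddBelow S := ⟨0, by
      intro t ht
      obtain ⟨i, hi⟩ := Set.mem_iUnion.mp ht
      exact hi.1⟩
    have hT := hScl.csInf_mem hSne hSb
    set T := sInf S with hTdef
    obtain ⟨i, hT0, hTi⟩ := Set.mem_iUnion.mp hT
    have hT0' : 0 ≤ T := hT0
    have hTi' : g T i ≤ 0 := by simpa [max_eq_left hT0'] using hTi
    have hlt : ∀ t, 0 ≤ t → t < T → ∀ j, 0 < g t j := by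
      intro t ht htT j
      by_contra hneg
      push Not at hneg
      have : t ∈ S := Set.mem_iUnion.mpr ⟨j, ht, by simpa [max_eq_left ht] using hneg⟩
      exact absurd (csInf_le hSb this) (not_le.mpr htT)
    set V : ℝ → ℝ := fun τ => g τ i * Real.exp (M i i * dlnP x τ i) with hV
    have hVd : ∀ τ ≥ (0 : ℝ), HasDerivAt V
        (Real.exp (M i i * dlnP x τ i) *
          ∑ j ∈ Finset.univ.erase i, (-M i j) * (x τ j * g τ j)) τ := by
      intro τ hτ
      have h1 := (hgd τ hτ i).mul (((hP τ hτ i).const_mul (M i i)).exp)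
      refine h1.congr_deriv ?_
      rw [← Finset.add_sum_erase _ _ (Finset.mem_univ i)]
      simp only [neg_mul, Finset.sum_neg_distrib]
      ring
    have hmono : MonotoneOn V (Set.Icc 0 T) := by
      apply monotoneOn_of_deriv_nonneg (convex_Icc 0 T)
      · intro τ hτ; exact (hVd τ hτ.1).continuousAt.continuousWithinAt
      · intro τ hτ
        rw [interior_Icc] at hτ
        exact (hVd τ hτ.1.le).differentiableAt.differentiableWithinAt
      · intro τ hτ
        rw [interior_Icc] at hτ
        rw [(hVd τ hτ.1.le).deriv]
        apply mul_nonneg (Real.exp_pos _).le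
        apply Finset.sum_nonneg
        intro j hj
        have h1 := hA2 i j (Finset.ne_of_mem_erase hj).symm
        have h2 := hpos τ hτ.1.le j
        have h3 := hlt τ hτ.1.le hτ.2 j
        exact mul_nonneg (by linarith) (mul_pos h2 h3).le
    have h1 := hmono (Set.left_mem_Icc.mpr hT0') (Set.right_mem_Icc.mpr hT0') hT0'
    have h2 : 0 < V 0 := mul_pos (hg0 i) (Real.exp_pos _)
    have h3 : V T ≤ 0 := mul_nonpos_of_nonpos_of_nonneg hTi' (Real.exp_pos _).le
    linarith
  have hxm : ∀ i, MonotoneOn (fun τ => x τ i) (Set.Ici 0) := by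
    intro i
    apply monotoneOn_of_deriv_nonneg (convex_Ici 0)
    · intro τ hτ; exact (hode τ hτ i).continuousAt.continuousWithinAt
    · intro τ hτ
      rw [interior_Ici] at hτ
      exact (hode τ (le_of_lt hτ) i).differentiableAt.differentiableWithinAt
    · intro τ hτ
      rw [interior_Ici] at hτ
      rw [(hode τ (le_of_lt hτ) i).deriv]
      exact (mul_pos (hpos τ (le_of_lt hτ) i) (hgpos τ (le_of_lt hτ) i)).le
  refine ⟨hform, fun t ht i => (hgpos t ht i).le, ?_⟩
  intro t ht t' htt' i
  have hii : ∀ a b, IntervalIntegrable (fun τ => x (max τ 0) i) MeasureTheory.volume a b :=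
    fun a b => (hcont i).intervalIntegrable a b
  have e : dlnP x t' i - dlnP x t i = ∫ τ in t..t', x (max τ 0) i :=
    intervalIntegral.integral_interval_sub_left (hii _ _) (hii _ _)
  rw [e]
  constructor
  · have := intervalIntegral.integral_mono_on htt' (intervalIntegrable_const (c := x t i)) (hii t t')
      (by
        intro τ hτ
        have h0 : (0 : ℝ) ≤ τ := le_trans ht hτ.1
        rw [max_eq_left h0]
        exact hxm i ht h0 hτ.1)
    simpa using this
  · have := intervalIntegral.integral_mono_on htt' (hii t t') (intervalIntegrable_const (c := x t' i))
      (by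
        intro τ hτ
        have h0 : (0 : ℝ) ≤ τ := le_trans ht hτ.1
        rw [max_eq_left h0]
        exact hxm i h0 (le_trans ht htt') hτ.2)
    simpa using this

/-- Theorem 1, point 2: Under (A1) and (A2), the support map
`s ↦ I(s) = {i : μᵢ(s) > 0}` of the regularized minimizers has finitely many
discontinuity points (all in `(0,∞)`), and away from them
`θ^{(ε)}(s log(1/ε)) → θ_*^{(I(s))}` as `ε → 0⁺`, uniformly on compact subsets of
`(0,∞)` minus the discontinuity points. -/
theorem dln_saddle_to_saddle (n d : ℕ) (hn : 0 < n) (hd : 0 < d)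
    (X : Matrix (Fin n) (Fin d) ℝ) (y : Fin n → ℝ)
    (M : Matrix (Fin d) (Fin d) ℝ) (r : Fin d → ℝ)
    (hM : M = Xᵀ * X) (hr : r = Xᵀ *ᵥ y)
    (hA1 : ∀ i, 0 < r i)
    (hA2 : ∀ i j, i ≠ j → M i j ≤ 0)
    (C k : Fin d → ℝ) (hC : ∀ i, 0 < C i) (hk : ∀ i, 0 < k i)
    (f : (Fin d → ℝ) → ℝ)
    (hf : ∀ θ : Fin d → ℝ, f θ =
      (1 / 2) * ∑ j, (y j) ^ 2 - ∑ i, r i * θ i + (1 / 2) * ∑ i, θ i * (M *ᵥ θ) i)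
    (μ : ℝ → Fin d → ℝ)
    (hμ : ∀ s > (0 : ℝ),
      (∀ i, 0 ≤ μ s i) ∧
      ∀ θ' : Fin d → ℝ, (∀ i, 0 ≤ θ' i) →
        f (μ s) + (1 / s) * ∑ i, k i * μ s i ≤ f θ' + (1 / s) * ∑ i, k i * θ' i)
    (θ : ℝ → ℝ → Fin d → ℝ)
    (hθinit : ∀ ε ∈ Set.Ioc (0 : ℝ) 1, ∀ i, θ ε 0 i = C i * ε ^ k i)
    (hθode : ∀ ε ∈ Set.Ioc (0 : ℝ) 1, ∀ t ≥ (0 : ℝ), ∀ i,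
      HasDerivAt (fun τ => θ ε τ i) (θ ε t i * (r i - (M *ᵥ θ ε t) i)) t) :
    ∃ Sdisc : Finset ℝ,
      (∀ s ∈ Sdisc, 0 < s) ∧
      -- `s ↦ I(s)` is locally constant away from the finitely many points of `Sdisc`
      (∀ s > (0 : ℝ), s ∉ Sdisc →
        ∀ᶠ s' in nhds s, {i : Fin d | 0 < μ s' i} = {i : Fin d | 0 < μ s i}) ∧
      -- pointwise convergence to the fixed point `θ_*^{(I(s))}`
      (∀ s > (0 : ℝ), s ∉ Sdisc →
        Filter.Tendsto (fun ε => θ ε (s * Real.log (1 / ε)))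
          (nhdsWithin 0 (Set.Ioi 0))
          (nhds (thetaStar M r (Finset.univ.filter (fun i => 0 < μ s i))))) ∧
      -- uniform convergence on compact subsets of `(0,∞) \ Sdisc`
      (∀ K : Set ℝ, IsCompact K → K ⊆ Set.Ioi 0 \ ↑Sdisc →
        TendstoUniformlyOn (fun ε s => θ ε (s * Real.log (1 / ε)))
          (fun s => thetaStar M r (Finset.univ.filter (fun i => 0 < μ s i)))
          (nhdsWithin 0 (Set.Ioi 0)) K) := by
  obtain ⟨K, hK0, hK⟩ := dln_pd X y M r hM hr hA1 hA2
  have hsym : Mᵀ = M := by rw [hM]; simp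
  have hdiag : ∀ i, 0 ≤ M i i := by
    intro i
    rw [hM, Matrix.mul_apply]
    exact Finset.sum_nonneg (fun j _ => by simpa using mul_self_nonneg (X j i))
  -- the rescaled minimizer
  set a : ℝ → Fin d → ℝ := fun s => s • μ s with ha
  have ha0 : ∀ s > (0 : ℝ), ∀ i, 0 ≤ a s i := fun s hs i => by
    simpa [ha] using mul_nonneg hs.le ((hμ s hs).1 i)
  have hapos : ∀ s > (0 : ℝ), ∀ i, 0 < a s i ↔ 0 < μ s i := fun s hs i => by
    simp [ha, hs]
  have hscale : ∀ s > (0 : ℝ), ∀ i, s * r i - k i - (M *ᵥ a s) i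
      = -s * (-r i + (M *ᵥ μ s) i + (1 / s) * k i) := by
    intro s hs i
    simp only [ha, Matrix.mulVec_smul, Pi.smul_apply, smul_eq_mul]
    field_simp
    ring
  have hw : ∀ s > (0 : ℝ), ∀ i, s * r i - k i - (M *ᵥ a s) i ≤ 0 := by
    intro s hs i
    have h1 := (dln_kkt y M r k hsym hdiag f hf s (μ s) (hμ s hs).1 (hμ s hs).2 i).1
    rw [hscale s hs i]
    nlinarith
  have haw : ∀ s > (0 : ℝ), ∀ i, a s i * (s * r i - k i - (M *ᵥ a s) i) = 0 := by
    intro s hs i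
    have h1 := (dln_kkt y M r k hsym hdiag f hf s (μ s) (hμ s hs).1 (hμ s hs).2 i).2
    rw [hscale s hs i]
    simp only [ha, Pi.smul_apply, smul_eq_mul]
    linear_combination (-s ^ 2) * h1
  set Lg : ℝ → ℝ := fun ε => Real.log (1 / ε) with hLg
  have hLtop : Filter.Tendsto Lg (nhdsWithin 0 (Set.Ioi 0)) Filter.atTop := by
    have : Lg = fun ε => -Real.log ε := by ext ε; simp [hLg]
    rw [this]
    exact Filter.tendsto_neg_atBot_atTop.comp Real.tendsto_log_nhdsGT_zero
  have hε1 : ∀ᶠ ε in nhdsWithin (0 : ℝ) (Set.Ioi 0), ε ∈ Set.Ioc (0 : ℝ) 1 :=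
    Ioc_mem_nhdsGT zero_lt_one
  have hsmall : ∀ᶠ ε in nhdsWithin (0 : ℝ) (Set.Ioi 0), ∀ i,
      0 < r i - (M *ᵥ fun j => C j * ε ^ k j) i := by
    rw [Filter.eventually_all]
    intro i
    have hc : ContinuousAt (fun ε : ℝ => r i - (M *ᵥ fun j => C j * ε ^ k j) i) 0 := by
      simp only [Matrix.mulVec, dotProduct]
      apply ContinuousAt.sub continuousAt_const
      apply tendsto_finsetSum
      intro j _
      exact (continuousAt_const.mul (continuousAt_const.mul
        (Real.continuousAt_rpow_const 0 (k j) (Or.inr (hk j).le))))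
    have h0 : 0 < r i - (M *ᵥ fun j => C j * (0 : ℝ) ^ k j) i := by
      have : (fun j => C j * (0 : ℝ) ^ k j) = 0 := by
        ext j; simp [Real.zero_rpow (hk j).ne']
      rw [this]; simpa using hA1 i
    exact (hc.eventually (lt_mem_nhds h0)).filter_mono nhdsWithin_le_nhds
  set A : ℝ → ℝ → Fin d → ℝ := fun ε s => (1 / Lg ε) • dlnP (θ ε) (s * Lg ε) with hA
  -- properties of good trajectories
  have hgood : ∀ᶠ ε in nhdsWithin (0 : ℝ) (Set.Ioi 0), 0 < Lg ε ∧
      (∀ s > (0 : ℝ), ‖A ε s - a s‖ ^ 2 ≤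
        K * (s * ∑ i, (C i + (K * ∑ i, r i) * ((K * ∑ i, r i) / C i))) / Lg ε) ∧
      (∀ s ≥ (0 : ℝ), ∀ s' ≥ s, ∀ i,
        (s' - s) * θ ε (s * Lg ε) i ≤ A ε s' i - A ε s i ∧
        A ε s' i - A ε s i ≤ (s' - s) * θ ε (s' * Lg ε) i) ∧
      (∀ s ≥ (0 : ℝ), ∀ i, 0 ≤ θ ε (s * Lg ε) i) := by
    filter_upwards [hε1, hsmall, hLtop.eventually_gt_atTop 0] with ε hε hsm hL
    have hinit : θ ε 0 = fun j => C j * ε ^ k j := funext (hθinit ε hε)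
    have hx0 : ∀ i, 0 < θ ε 0 i := by
      intro i; rw [hθinit ε hε i]; exact mul_pos (hC i) (Real.rpow_pos_of_pos hε.1 _)
    obtain ⟨h1, h2, h3⟩ := dln_traj M r hA2 (θ ε) hx0 (by rw [hinit]; exact hsm) (hθode ε hε)
    have hslope : ∀ s ≥ (0 : ℝ), ∀ s' ≥ s, ∀ i,
        (s' - s) * θ ε (s * Lg ε) i ≤ A ε s' i - A ε s i ∧
        A ε s' i - A ε s i ≤ (s' - s) * θ ε (s' * Lg ε) i := by
      intro s hs s' hs' i
      obtain ⟨h4, h5⟩ := h3 (s * Lg ε) (mul_nonneg hs hL.le) (s' * Lg ε)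
        (mul_le_mul_of_nonneg_right hs' hL.le) i
      have e : A ε s' i - A ε s i =
          (dlnP (θ ε) (s' * Lg ε) i - dlnP (θ ε) (s * Lg ε) i) / Lg ε := by
        simp only [hA, Pi.smul_apply, smul_eq_mul]; ring
      rw [e, le_div_iff₀ hL, div_le_iff₀ hL]
      constructor <;> linarith
    have hθnn : ∀ s ≥ (0 : ℝ), ∀ i, 0 ≤ θ ε (s * Lg ε) i := by
      intro s hs i
      rw [h1 _ (mul_nonneg hs hL.le) i]
      exact mul_nonneg (hx0 i).le (Real.exp_pos _).le
    have hA0 : A ε 0 = 0 := by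
      ext i; simp [hA, dlnP]
    refine ⟨hL, ?_, hslope, hθnn⟩
    intro s hs
    apply dln_stab M r k C K hK0 hK hA1 hk hC s (Lg ε) hs hL (a s) (A ε s)
      (θ ε (s * Lg ε)) (ha0 s hs) (hw s hs) (haw s hs)
    · intro i
      have h4 := (hslope 0 le_rfl s hs.le i).1
      rw [hA0] at h4
      have h5 := mul_nonneg (sub_nonneg.mpr hs.le) (hθnn 0 le_rfl i)
      simp only [Pi.zero_apply, sub_zero] at h4 h5
      linarith
    · intro i
      rw [h1 _ (mul_nonneg hs.le hL.le) i, hθinit ε hε i, Real.rpow_def_of_pos hε.1, mul_assoc,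
        ← Real.exp_add]
      congr 2
      have e1 : Real.log ε = -Lg ε := by simp [hLg]
      have e2 : (M *ᵥ A ε s) i = (M *ᵥ dlnP (θ ε) (s * Lg ε)) i / Lg ε := by
        simp only [hA, Matrix.mulVec_smul, Pi.smul_apply, smul_eq_mul]; ring
      rw [e1, e2]
      field_simp
      ring
    · intro i
      have h4 := (hslope 0 le_rfl s hs.le i).2
      rw [hA0] at h4
      simpa using h4
    · intro i
      have := h2 _ (mul_nonneg hs.le hL.le) i
      linarith
  set Q : ℝ := ∑ i, (C i + (K * ∑ i, r i) * ((K * ∑ i, r i) / C i)) with hQ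
  have hQ0 : 0 ≤ Q := by
    apply Finset.sum_nonneg
    intro i _
    have hR : 0 ≤ ∑ i, r i := Finset.sum_nonneg (fun i _ => (hA1 i).le)
    have := hC i
    positivity
  have hconv : ∀ S > (0 : ℝ), ∀ δ > (0 : ℝ), ∀ᶠ ε in nhdsWithin (0 : ℝ) (Set.Ioi 0),
      ∀ s, 0 < s → s ≤ S → ∀ i, |A ε s i - a s i| ≤ δ := by
    intro S hS δ hδ
    filter_upwards [hgood, hLtop.eventually_ge_atTop (K * (S * Q) / δ ^ 2)] with ε hε hL s hs hsS i
    have h1 := hε.2.1 s hs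
    have h2 : K * (s * Q) / Lg ε ≤ δ ^ 2 := by
      rw [div_le_iff₀ hε.1]
      rw [div_le_iff₀ (by positivity)] at hL
      have : K * (s * Q) ≤ K * (S * Q) := by gcongr
      linarith
    have h3 : ‖A ε s - a s‖ ≤ δ := abs_le_of_sq_le_sq' (h1.trans h2) hδ.le |>.2
    exact (norm_le_pi_norm (A ε s - a s) i).trans h3
  have hamono : ∀ s > (0 : ℝ), ∀ s' ≥ s, ∀ i, a s i ≤ a s' i := by
    intro s hs s' hss' i
    apply le_of_forall_pos_le_add
    intro δ hδ
    have hs' : 0 < s' := lt_of_lt_of_le hs hss'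
    obtain ⟨ε, h1, h2⟩ := (hgood.and (hconv s' hs' (δ / 2) (by positivity))).exists
    have h3 := abs_le.mp (h2 s hs hss' i)
    have h4 := abs_le.mp (h2 s' hs' le_rfl i)
    have h5 := (h1.2.2.1 s hs.le s' hss' i).1
    have h6 := mul_nonneg (sub_nonneg.mpr hss') (h1.2.2.2 s hs.le i)
    linarith [h3.1, h4.2]
  -- the thresholds
  set U : Fin d → Set ℝ := fun i => {s | 0 < s ∧ 0 < μ s i} with hU
  set Sd : Finset ℝ := (Finset.univ.image (fun i => sInf (U i))).filter (fun s => 0 < s) with hSd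
  have hlocal : ∀ s > (0 : ℝ), s ∉ Sd → ∀ i, ∀ᶠ s' in nhds s, (0 < μ s' i ↔ 0 < μ s i) := by
    intro s hs hsd i
    have hne : s ≠ sInf (U i) := by
      rintro rfl
      apply hsd
      rw [hSd, Finset.mem_filter]
      exact ⟨Finset.mem_image_of_mem _ (Finset.mem_univ i), hs⟩
    have hb : BddBelow (U i) := ⟨0, fun t ht => ht.1.le⟩
    have hup : ∀ t ∈ U i, ∀ t' ≥ t, 0 < μ t' i := by
      intro t ht t' htt'
      have ht' : 0 < t' := lt_of_lt_of_le ht.1 htt'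
      rw [← hapos t' ht']
      exact lt_of_lt_of_le ((hapos t ht.1 i).mpr ht.2) (hamono t ht.1 t' htt' i)
    rcases Set.eq_empty_or_nonempty (U i) with hemp | hnon
    · have hno : ∀ t > (0 : ℝ), ¬ 0 < μ t i := by
        intro t ht hcon
        have : t ∈ U i := ⟨ht, hcon⟩
        rw [hemp] at this
        exact this
      filter_upwards [lt_mem_nhds hs] with t ht
      exact iff_of_false (hno t ht) (hno s hs)
    · rcases lt_or_gt_of_ne hne with hlt | hgt
      · have hno : ∀ t > (0 : ℝ), t < sInf (U i) → ¬ 0 < μ t i := by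
          intro t ht htl hcon
          exact absurd (csInf_le hb (show t ∈ U i from ⟨ht, hcon⟩)) (not_le.mpr htl)
        filter_upwards [lt_mem_nhds hs, gt_mem_nhds hlt] with t ht htl
        exact iff_of_false (hno t ht htl) (hno s hs hlt)
      · obtain ⟨t, htU, hts⟩ := exists_lt_of_csInf_lt hnon hgt
        filter_upwards [lt_mem_nhds hts] with t' ht'
        exact iff_of_true (hup t htU t' ht'.le) (hup t htU s hts.le)
  have hlocal' : ∀ s > (0 : ℝ), s ∉ Sd → ∀ᶠ s' in nhds s, ∀ i, (0 < μ s' i ↔ 0 < μ s i) :=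
    fun s hs hsd => Filter.eventually_all.mpr (hlocal s hs hsd)
  have hunif : TendstoLocallyUniformlyOn (fun ε s => θ ε (s * Real.log (1 / ε)))
      (fun s => thetaStar M r (Finset.univ.filter (fun i => 0 < μ s i)))
      (nhdsWithin 0 (Set.Ioi 0)) (Set.Ioi 0 \ ↑Sd) := by
    rw [Metric.tendstoLocallyUniformlyOn_iff]
    intro δ hδ s₀ hs₀
    have hs₀0 : 0 < s₀ := hs₀.1
    obtain ⟨ρ, hρ, hball⟩ := Metric.eventually_nhds_iff.mp
      ((hlocal' s₀ hs₀0 hs₀.2).and (lt_mem_nhds hs₀0))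
    set h := ρ / 3 with hh
    have hh0 : 0 < h := by positivity
    set I := Finset.univ.filter (fun i => 0 < μ s₀ i) with hI
    have hIs : ∀ s, |s - s₀| < ρ → 0 < s ∧ Finset.univ.filter (fun i => 0 < μ s i) = I := by
      intro s hs
      obtain ⟨h1, h2⟩ := hball (y := s) (by rwa [Real.dist_eq])
      refine ⟨h2, ?_⟩
      ext i
      simp [hI, h1 i]
    have haff : ∀ s s', |s - s₀| < ρ → |s' - s₀| < ρ → ∀ i,
        a s' i - a s i = (s' - s) * thetaStar M r I i := by
      intro s s' hs hs' i
      obtain ⟨hs1, hs2⟩ := hIs s hs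
      obtain ⟨hs1', hs2'⟩ := hIs s' hs'
      have hz : ∀ t > (0 : ℝ), Finset.univ.filter (fun i => 0 < μ t i) = I → ∀ j, j ∉ I →
          a t j = 0 := by
        intro t ht htI j hj
        rw [← htI] at hj
        simp only [Finset.mem_filter, Finset.mem_univ, true_and] at hj
        rw [← hapos t ht] at hj
        exact le_antisymm (not_lt.mp hj) (ha0 t ht j)
      have he : ∀ t > (0 : ℝ), Finset.univ.filter (fun i => 0 < μ t i) = I → ∀ j ∈ I,
          (M *ᵥ a t) j = t * r j - k j := by
        intro t ht htI j hj
        rw [← htI] at hj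
        simp only [Finset.mem_filter, Finset.mem_univ, true_and] at hj
        rw [← hapos t ht] at hj
        have := haw t ht j
        rcases mul_eq_zero.mp this with h1 | h1
        · exact absurd h1 hj.ne'
        · linarith
      have := dln_star M r K hK I (a s' - a s) (s' - s) (by
        intro j hj
        simp [hz s hs1 hs2 j hj, hz s' hs1' hs2' j hj]) (by
        intro j hj
        rw [Matrix.mulVec_sub, Pi.sub_apply, he s hs1 hs2 j hj, he s' hs1' hs2' j hj]
        ring)
      exact congrFun this i
    refine ⟨Metric.ball s₀ h ∩ (Set.Ioi 0 \ ↑Sd), ?_, ?_⟩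
    · exact Filter.inter_mem (mem_nhdsWithin_of_mem_nhds (Metric.ball_mem_nhds _ hh0))
        self_mem_nhdsWithin
    filter_upwards [hgood, hconv (s₀ + ρ) (by positivity) (δ * h / 4) (by positivity)]
      with ε hg hc s hs
    have hs1 : |s - s₀| < h := by simpa [Real.dist_eq] using hs.1
    have hs2 := abs_lt.mp hs1
    have hb1 : |s - s₀| < ρ := by linarith
    have hb2 : |s + h - s₀| < ρ := by rw [abs_lt]; constructor <;> linarith [hs2.1, hs2.2]
    have hb3 : |s - h - s₀| < ρ := by rw [abs_lt]; constructor <;> linarith [hs2.1, hs2.2]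
    have hp1 := (hIs _ hb1).1
    have hp2 := (hIs _ hb2).1
    have hp3 := (hIs _ hb3).1
    rw [(hIs _ hb1).2]
    refine lt_of_le_of_lt ?_ (half_lt_self hδ)
    rw [dist_pi_le_iff (by positivity)]
    intro i
    have c1 := abs_le.mp (hc s hp1 (by linarith [hs2.2]) i)
    have c2 := abs_le.mp (hc (s + h) hp2 (by linarith [hs2.2]) i)
    have c3 := abs_le.mp (hc (s - h) hp3 (by linarith [hs2.2]) i)
    have u1 := (hg.2.2.1 s hp1.le (s + h) (by linarith) i).1
    have u2 := (hg.2.2.1 (s - h) hp3.le s (by linarith) i).2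
    have f1 := haff s (s + h) hb1 hb2 i
    have f2 := haff (s - h) s hb3 hb1 i
    have e1 : s + h - s = h := by ring
    have e2 : s - (s - h) = h := by ring
    rw [e1] at u1 f1
    rw [e2] at u2 f2
    rw [Real.dist_eq, abs_le]
    change -(δ / 2) ≤ thetaStar M r I i - θ ε (s * Lg ε) i ∧
      thetaStar M r I i - θ ε (s * Lg ε) i ≤ δ / 2
    constructor
    · have : h * θ ε (s * Lg ε) i ≤ h * (thetaStar M r I i + δ / 2) := by
        linarith [c1.1, c2.2]
      have := le_of_mul_le_mul_left this hh0
      linarith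
    · have : h * (thetaStar M r I i - δ / 2) ≤ h * θ ε (s * Lg ε) i := by
        linarith [c1.1, c3.2]
      have := le_of_mul_le_mul_left this hh0
      linarith
  have hfin : ∀ K : Set ℝ, IsCompact K → K ⊆ Set.Ioi 0 \ ↑Sd →
        TendstoUniformlyOn (fun ε s => θ ε (s * Real.log (1 / ε)))
          (fun s => thetaStar M r (Finset.univ.filter (fun i => 0 < μ s i)))
          (nhdsWithin 0 (Set.Ioi 0)) K := by
    intro K' hK' hsub
    exact (tendstoLocallyUniformlyOn_iff_tendstoUniformlyOn_of_compact hK').mp (hunif.mono hsub)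
  refine ⟨Sd, ?_, ?_, ?_, hfin⟩
  · intro s hs
    exact (Finset.mem_filter.mp hs).2
  · intro s hs hsd
    filter_upwards [hlocal' s hs hsd] with s' hs'
    ext i
    exact hs' i
  · intro s hs hsd
    exact (hfin {s} isCompact_singleton (by
      rintro t rfl; exact ⟨hs, hsd⟩)).tendsto_at (Set.mem_singleton s)
end

section
/- Assume (A1) r has all coordinates strictly positive and (A2) M_{ij} ≤ 0 for all i ≠ j, where M = XᵀX and r = Xᵀy. For η > 0 and ε ∈ (0,1], let τ_η^{(ε)} = inf{ t ≥ 0 : ‖θ^{(ε)}(t) − M⁻¹r‖ ≤ η } be the hitting time of the Euclidean ball of radius η around the global minimizer M⁻¹r of f. Then there exists η₀ > 0 such that for every η ∈ (0, η₀], τ_η^{(ε)} / log(1/ε) → max_{i ∈ {1,…,d}} (M⁻¹k)_i / (M⁻¹r)_i as ε → 0. -/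
open Matrix

namespace DLN

/-- inverse positivity for the Gram matrix -/
lemma inv_pos {n d : ℕ} (X : Matrix (Fin n) (Fin d) ℝ) (y : Fin n → ℝ)
    (M : Matrix (Fin d) (Fin d) ℝ) (r : Fin d → ℝ)
    (hM : M = Xᵀ * X) (hr : r = Xᵀ *ᵥ y)
    (hA1 : ∀ i, 0 < r i)
    (hA2 : ∀ i j, i ≠ j → M i j ≤ 0) (v : Fin d → ℝ) (hv : ∀ i, 0 ≤ (M *ᵥ v) i) :
    ∀ i, 0 ≤ v i := by
  set w : Fin d → ℝ := fun i => max (-v i) 0 with hw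
  have hw0 : ∀ i, 0 ≤ w i := fun i => le_max_right _ _
  have h1 : w ⬝ᵥ (M *ᵥ w) = (X *ᵥ w) ⬝ᵥ (X *ᵥ w) := by
    rw [hM, ← Matrix.mulVec_mulVec, Matrix.dotProduct_mulVec, Matrix.vecMul_transpose]
  have h2 : 0 ≤ w ⬝ᵥ (M *ᵥ v) :=
    Finset.sum_nonneg fun i _ => mul_nonneg (hw0 i) (hv i)
  have h3 : w ⬝ᵥ (M *ᵥ (v + w)) ≤ 0 := by
    simp only [dotProduct, mulVec, Finset.mul_sum]
    refine Finset.sum_nonpos fun i _ => Finset.sum_nonpos fun j _ => ?_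
    have hvw : 0 ≤ (v + w) j := by
      have : -v j ≤ w j := le_max_left _ _
      simp only [Pi.add_apply]; linarith
    by_cases hij : i = j
    · subst hij
      have : w i * (v + w) i = 0 := by
        simp only [Pi.add_apply, hw]
        rcases le_total (-v i) 0 with h | h
        · simp [max_eq_right h]
        · simp [max_eq_left h]
      have h' : w i * (M i i * (v + w) i) = M i i * (w i * (v + w) i) := by ring
      rw [h', this, mul_zero]
    · exact mul_nonpos_of_nonneg_of_nonpos (hw0 i)
        (mul_nonpos_of_nonpos_of_nonneg (hA2 i j hij) hvw)
  rw [Matrix.mulVec_add, dotProduct_add, h1] at h3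
  have h4 : (X *ᵥ w) ⬝ᵥ (X *ᵥ w) = 0 := by
    have : 0 ≤ (X *ᵥ w) ⬝ᵥ (X *ᵥ w) := Finset.sum_nonneg fun i _ => mul_self_nonneg _
    linarith
  have h5 : X *ᵥ w = 0 := dotProduct_self_eq_zero.mp h4
  have h6 : r ⬝ᵥ w = 0 := by
    rw [hr, Matrix.mulVec_transpose, ← Matrix.dotProduct_mulVec, h5, dotProduct_zero]
  intro i
  have h7 := (Finset.sum_eq_zero_iff_of_nonneg
    (fun j _ => mul_nonneg (hA1 j).le (hw0 j))).mp h6 i (Finset.mem_univ i)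
  have h8 : w i = 0 := by
    rcases mul_eq_zero.mp h7 with h | h
    · exact absurd h (hA1 i).ne'
    · exact h
  have : -v i ≤ w i := le_max_left _ _
  linarith

section sol

variable {d : ℕ} {M N : Matrix (Fin d) (Fin d) ℝ} {r : Fin d → ℝ} {θ : ℝ → Fin d → ℝ}

lemma sol_cont (hode : ∀ t ≥ (0 : ℝ), ∀ i,
      HasDerivAt (fun τ => θ τ i) (θ t i * (r i - (M *ᵥ θ t) i)) t) (i : Fin d) :
    ContinuousOn (fun t => r i - (M *ᵥ θ t) i) (Set.Ici 0) := by
  simp only [mulVec, dotProduct]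
  refine continuousOn_const.sub (continuousOn_finsetSum _ fun j _ => continuousOn_const.mul ?_)
  exact fun t ht => (hode t ht j).continuousAt.continuousWithinAt

lemma sol_pos (hode : ∀ t ≥ (0 : ℝ), ∀ i,
      HasDerivAt (fun τ => θ τ i) (θ t i * (r i - (M *ᵥ θ t) i)) t)
    (h0 : ∀ i, 0 < θ 0 i) (t : ℝ) (ht : 0 ≤ t) (i : Fin d) : 0 < θ t i := by
  set g : ℝ → ℝ := fun t => r i - (M *ᵥ θ (max t 0)) i with hg
  have hgc : Continuous g := by
    have := (sol_cont hode i).comp_continuous (f := fun t : ℝ => max t 0) (by fun_prop)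
      (fun t => Set.mem_Ici.mpr (le_max_right _ _))
    exact this
  set G : ℝ → ℝ := fun t => ∫ s in (0:ℝ)..t, g s with hG
  have hGd : ∀ t, HasDerivAt G (g t) t := fun t => hgc.integral_hasStrictDerivAt 0 t |>.hasDerivAt
  have hd : ∀ s ≥ (0:ℝ), HasDerivAt (fun τ => θ τ i * Real.exp (-G τ)) 0 s := by
    intro s hs
    have := (hode s hs i).fun_mul ((hGd s).fun_neg.exp)
    refine this.congr_deriv ?_
    simp only [hg, max_eq_left hs]
    ring
  have hc := (convex_Ici (0:ℝ)).is_const_of_fderivWithin_eq_zero (𝕜 := ℝ)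
    (f := fun τ => θ τ i * Real.exp (-G τ))
    (fun s hs => (hd s hs).differentiableAt.differentiableWithinAt)
    (fun s hs => by
      have := ((hd s hs).hasFDerivAt.hasFDerivWithinAt (s := Set.Ici (0:ℝ))).fderivWithin
        (uniqueDiffOn_Ici 0 s hs)
      rw [this]; ext; simp) (Set.mem_Ici.mpr ht) (Set.mem_Ici.mpr le_rfl)
  have hp : 0 < θ t i * Real.exp (-G t) := by
    rw [hc]; exact mul_pos (h0 i) (Real.exp_pos _)
  exact pos_of_mul_pos_left hp (Real.exp_pos _).le

/-- explicit form of the integral of the solution -/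
noncomputable def Phi (N : Matrix (Fin d) (Fin d) ℝ) (r : Fin d → ℝ) (θ : ℝ → Fin d → ℝ)
    (t : ℝ) (i : Fin d) : ℝ :=
  (N *ᵥ (fun j => Real.log (θ 0 j) - Real.log (θ t j))) i + (N *ᵥ r) i * t

lemma Phi_deriv (hNM : N * M = 1) (hode : ∀ t ≥ (0 : ℝ), ∀ i,
      HasDerivAt (fun τ => θ τ i) (θ t i * (r i - (M *ᵥ θ t) i)) t)
    (h0 : ∀ i, 0 < θ 0 i) (t : ℝ) (ht : 0 ≤ t) (i : Fin d) :
    HasDerivAt (fun τ => Phi N r θ τ i) (θ t i) t := by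
  have h1 : ∀ j, HasDerivAt (fun τ => N i j * (Real.log (θ 0 j) - Real.log (θ τ j)))
      (N i j * (0 - (r j - (M *ᵥ θ t) j))) t := by
    intro j
    have hp := (sol_pos hode h0 t ht j).ne'
    have := ((hasDerivAt_const t (Real.log (θ 0 j))).sub ((hode t ht j).log hp)).const_mul (N i j)
    refine this.congr_deriv ?_
    rw [mul_div_cancel_left₀ _ hp]
  have h2 := HasDerivAt.fun_sum (u := Finset.univ) fun j _ => h1 j
  have h3 := h2.add ((hasDerivAt_id t).const_mul ((N *ᵥ r) i))
  refine h3.congr_deriv ?_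
  have e : θ t i = (N *ᵥ (M *ᵥ θ t)) i := by
    rw [Matrix.mulVec_mulVec, hNM, Matrix.one_mulVec]
  rw [e]
  simp only [mulVec, dotProduct, mul_one, ← Finset.sum_add_distrib]
  refine Finset.sum_congr rfl fun j _ => by ring

lemma Phi_zero (i : Fin d) : Phi N r θ 0 i = 0 := by
  simp [Phi, mulVec, dotProduct]

/-- the drift stays nonnegative -/
lemma drift_nonneg (hNM : N * M = 1) (hA2 : ∀ i j, i ≠ j → M i j ≤ 0)
    (hode : ∀ t ≥ (0 : ℝ), ∀ i,
      HasDerivAt (fun τ => θ τ i) (θ t i * (r i - (M *ᵥ θ t) i)) t)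
    (h0 : ∀ i, 0 < θ 0 i) (hs0 : ∀ i, (M *ᵥ θ 0) i < r i) (t : ℝ) (ht : 0 ≤ t) (i : Fin d) :
    0 < r i - (M *ᵥ θ t) i := by
  by_contra hcon
  set v : Fin d → ℝ → ℝ := fun i t => r i - (M *ᵥ θ t) i with hv
  have hvc : ∀ i, ContinuousOn (v i) (Set.Ici 0) := fun i => sol_cont hode i
  set S : Set ℝ := ⋃ i, (Set.Ici 0 ∩ v i ⁻¹' Set.Iic 0) with hS
  have hSc : IsClosed S := isClosed_iUnion_of_finite fun i =>
    (hvc i).preimage_isClosed_of_isClosed isClosed_Ici isClosed_Iic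
  have hSn : S.Nonempty := ⟨t, Set.mem_iUnion.mpr ⟨i, ht, not_lt.mp hcon⟩⟩
  have hSb : BddBelow S := ⟨0, fun x hx => by
    obtain ⟨j, hj, _⟩ := Set.mem_iUnion.mp hx; exact hj⟩
  obtain ⟨j, hT0, hTj⟩ := Set.mem_iUnion.mp (hSc.csInf_mem hSn hSb)
  set T := sInf S with hT
  have hbelow : ∀ s, 0 ≤ s → s < T → ∀ l, 0 < v l s := by
    intro s hs hsT l
    by_contra hc
    exact absurd (csInf_le hSb (Set.mem_iUnion.mpr ⟨l, hs, not_lt.mp hc⟩)) (not_le.mpr hsT)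
  have hvd : ∀ s ≥ (0:ℝ), HasDerivAt (v j) (- ∑ l, M j l * (θ s l * v l s)) s := by
    intro s hs
    have := (HasDerivAt.fun_sum (u := Finset.univ)
      fun l _ => (hode s hs l).const_mul (M j l)).const_sub (r j)
    exact this
  have hFd : ∀ s ≥ (0:ℝ), HasDerivAt (fun s => v j s * Real.exp (M j j * Phi N r θ s j))
      ((- ∑ l, M j l * (θ s l * v l s)) * Real.exp (M j j * Phi N r θ s j)
        + v j s * (Real.exp (M j j * Phi N r θ s j) * (M j j * θ s j))) s := fun s hs =>
    (hvd s hs).mul (((Phi_deriv hNM hode h0 s hs j).const_mul (M j j)).exp)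
  have hmono : MonotoneOn (fun s => v j s * Real.exp (M j j * Phi N r θ s j)) (Set.Icc 0 T) := by
    refine monotoneOn_of_deriv_nonneg (convex_Icc 0 T)
      (fun s hs => (hFd s hs.1).continuousAt.continuousWithinAt) ?_ ?_
    · intro s hs
      rw [interior_Icc] at hs
      exact (hFd s hs.1.le).differentiableAt.differentiableWithinAt
    · intro s hs
      rw [interior_Icc] at hs
      rw [(hFd s hs.1.le).deriv]
      have e : (- ∑ l, M j l * (θ s l * v l s)) * Real.exp (M j j * Phi N r θ s j)
        + v j s * (Real.exp (M j j * Phi N r θ s j) * (M j j * θ s j))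
        = Real.exp (M j j * Phi N r θ s j) *
          (M j j * (θ s j * v j s) - ∑ l, M j l * (θ s l * v l s)) := by ring
      rw [e]
      refine mul_nonneg (Real.exp_pos _).le ?_
      rw [← Finset.add_sum_erase _ _ (Finset.mem_univ j)]
      have : ∑ l ∈ Finset.univ.erase j, M j l * (θ s l * v l s) ≤ 0 := by
        refine Finset.sum_nonpos fun l hl => ?_
        exact mul_nonpos_of_nonpos_of_nonneg (hA2 j l (Finset.ne_of_mem_erase hl).symm)
          (mul_nonneg (sol_pos hode h0 s hs.1.le l).le (hbelow s hs.1.le hs.2 l).le)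
      linarith
  have h := hmono (Set.left_mem_Icc.mpr hT0) (Set.right_mem_Icc.mpr hT0) hT0
  simp only [Phi_zero, mul_zero, Real.exp_zero, mul_one] at h
  have h1 : v j T * Real.exp (M j j * Phi N r θ T j) ≤ 0 :=
    mul_nonpos_of_nonpos_of_nonneg hTj (Real.exp_pos _).le
  have h2 : 0 < v j 0 := sub_pos.mpr (hs0 j)
  linarith

lemma sol_mono (hNM : N * M = 1) (hA2 : ∀ i j, i ≠ j → M i j ≤ 0)
    (hode : ∀ t ≥ (0 : ℝ), ∀ i,
      HasDerivAt (fun τ => θ τ i) (θ t i * (r i - (M *ᵥ θ t) i)) t)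
    (h0 : ∀ i, 0 < θ 0 i) (hs0 : ∀ i, (M *ᵥ θ 0) i < r i) (i : Fin d) :
    MonotoneOn (fun t => θ t i) (Set.Ici 0) := by
  refine monotoneOn_of_deriv_nonneg (convex_Ici 0)
      (fun s hs => (hode s hs i).continuousAt.continuousWithinAt) ?_ ?_
  · intro s hs
    exact (hode s (interior_subset hs) i).differentiableAt.differentiableWithinAt
  · intro s hs
    have hs' : 0 ≤ s := interior_subset hs
    rw [(hode s hs' i).deriv]
    exact mul_nonneg (sol_pos hode h0 s hs' i).le (drift_nonneg hNM hA2 hode h0 hs0 s hs' i).le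

lemma Phi_nonneg (hNM : N * M = 1) (hode : ∀ t ≥ (0 : ℝ), ∀ i,
      HasDerivAt (fun τ => θ τ i) (θ t i * (r i - (M *ᵥ θ t) i)) t)
    (h0 : ∀ i, 0 < θ 0 i) (t : ℝ) (ht : 0 ≤ t) (i : Fin d) : 0 ≤ Phi N r θ t i := by
  have : MonotoneOn (fun t => Phi N r θ t i) (Set.Ici 0) := by
    refine monotoneOn_of_deriv_nonneg (convex_Ici 0)
      (fun s hs => (Phi_deriv hNM hode h0 s hs i).continuousAt.continuousWithinAt) ?_ ?_
    · intro s hs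
      exact (Phi_deriv hNM hode h0 s (interior_subset hs) i).differentiableAt.differentiableWithinAt
    · intro s hs
      rw [(Phi_deriv hNM hode h0 s (interior_subset hs) i).deriv]
      exact (sol_pos hode h0 s (interior_subset hs) i).le
  have h := this (Set.mem_Ici.mpr le_rfl) (Set.mem_Ici.mpr ht) ht
  simpa only [Phi_zero] using h

lemma Phi_sub_le (hNM : N * M = 1) (hA2 : ∀ i j, i ≠ j → M i j ≤ 0)
    (hode : ∀ t ≥ (0 : ℝ), ∀ i,
      HasDerivAt (fun τ => θ τ i) (θ t i * (r i - (M *ᵥ θ t) i)) t)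
    (h0 : ∀ i, 0 < θ 0 i) (hs0 : ∀ i, (M *ᵥ θ 0) i < r i) (s t : ℝ) (hs : 0 ≤ s) (hst : s ≤ t)
    (i : Fin d) : Phi N r θ t i - Phi N r θ s i ≤ θ t i * (t - s) := by
  refine (convex_Icc s t).image_sub_le_mul_sub_of_deriv_le (f := fun t => Phi N r θ t i)
    (fun x hx => (Phi_deriv hNM hode h0 x (hs.trans hx.1) i).continuousAt.continuousWithinAt)
    ?_ ?_ s (Set.left_mem_Icc.mpr hst) t (Set.right_mem_Icc.mpr hst) hst
  · intro x hx
    have hx := interior_subset hx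
    exact (Phi_deriv hNM hode h0 x (hs.trans hx.1) i).differentiableAt.differentiableWithinAt
  · intro x hx
    have hx := interior_subset hx
    rw [(Phi_deriv hNM hode h0 x (hs.trans hx.1) i).deriv]
    exact sol_mono hNM hA2 hode h0 hs0 i (Set.mem_Ici.mpr (hs.trans hx.1))
      (Set.mem_Ici.mpr (hs.trans hst)) hx.2

end sol

end DLN

open Matrix

/-- Corollary 2: Under (A1) and (A2), the hitting time `τ_η^{(ε)}` of the
Euclidean ball of radius `η` around the global minimizer `M⁻¹r` satisfies, for all
`η > 0` small enough, `τ_η^{(ε)} / log(1/ε) → maxᵢ (M⁻¹k)ᵢ / (M⁻¹r)ᵢ` as `ε → 0⁺`. -/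
theorem dln_convergence_time (n d : ℕ) (hn : 0 < n) (hd : 0 < d)
    (X : Matrix (Fin n) (Fin d) ℝ) (y : Fin n → ℝ)
    (M : Matrix (Fin d) (Fin d) ℝ) (r : Fin d → ℝ)
    (hM : M = Xᵀ * X) (hr : r = Xᵀ *ᵥ y)
    (hA1 : ∀ i, 0 < r i)
    (hA2 : ∀ i j, i ≠ j → M i j ≤ 0)
    (C k : Fin d → ℝ) (hC : ∀ i, 0 < C i) (hk : ∀ i, 0 < k i)
    (θ : ℝ → ℝ → Fin d → ℝ)
    (hθinit : ∀ ε ∈ Set.Ioc (0 : ℝ) 1, ∀ i, θ ε 0 i = C i * ε ^ k i)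
    (hθode : ∀ ε ∈ Set.Ioc (0 : ℝ) 1, ∀ t ≥ (0 : ℝ), ∀ i,
      HasDerivAt (fun τ => θ ε τ i) (θ ε t i * (r i - (M *ᵥ θ ε t) i)) t) :
    ∃ η₀ > (0 : ℝ), ∀ η ∈ Set.Ioc (0 : ℝ) η₀,
      Filter.Tendsto
        (fun ε =>
          sInf {t : ℝ | 0 ≤ t ∧
            Real.sqrt (∑ i, (θ ε t i - (M⁻¹ *ᵥ r) i) ^ 2) ≤ η} / Real.log (1 / ε))
        (nhdsWithin 0 (Set.Ioi 0))
        (nhds (⨆ i : Fin d, (M⁻¹ *ᵥ k) i / (M⁻¹ *ᵥ r) i)) := by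
  classical
  have hinv := DLN.inv_pos X y M r hM hr hA1 hA2
  have hinj : Function.Injective M.mulVec := by
    intro a b hab
    have hab : M *ᵥ a = M *ᵥ b := hab
    have h1 := hinv (a - b) (fun i => by rw [Matrix.mulVec_sub, hab, sub_self]; exact le_rfl)
    have h2 := hinv (b - a) (fun i => by rw [Matrix.mulVec_sub, hab, sub_self]; exact le_rfl)
    funext i
    have h1 := h1 i
    have h2 := h2 i
    simp only [Pi.sub_apply] at h1 h2
    linarith
  have hunit : IsUnit M := Matrix.mulVec_injective_iff_isUnit.mp hinj
  have hdet : IsUnit M.det := (Matrix.isUnit_iff_isUnit_det M).mp hunit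
  have hMN : M * M⁻¹ = 1 := Matrix.mul_nonsing_inv M hdet
  have hNM : M⁻¹ * M = 1 := Matrix.nonsing_inv_mul M hdet
  clear hM hr
  generalize M⁻¹ = N at hMN hNM ⊢
  -- monotonicity of N
  have hNmono : ∀ a b : Fin d → ℝ, (∀ i, a i ≤ b i) → ∀ i, (N *ᵥ a) i ≤ (N *ᵥ b) i := by
    intro a b hab i
    have := hinv (N *ᵥ b - N *ᵥ a) (fun i => by
      rw [Matrix.mulVec_sub, Matrix.mulVec_mulVec, Matrix.mulVec_mulVec, hMN, Matrix.one_mulVec,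
        Matrix.one_mulVec]
      exact sub_nonneg.mpr (hab i)) i
    exact sub_nonneg.mp this
  have hNpos : ∀ a : Fin d → ℝ, (∀ i, 0 < a i) → ∀ i, 0 < (N *ᵥ a) i := by
    intro a ha i
    have hnn : ∀ i, 0 ≤ (N *ᵥ a) i := fun i => by
      have := hNmono 0 a (fun i => (ha i).le) i
      simpa using this
    have e : (M *ᵥ (N *ᵥ a)) i = a i := by rw [Matrix.mulVec_mulVec, hMN, Matrix.one_mulVec]
    refine (hnn i).lt_of_ne' fun h0 => ?_
    have : (M *ᵥ (N *ᵥ a)) i ≤ 0 := by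
      rw [mulVec, dotProduct]
      refine Finset.sum_nonpos fun j _ => ?_
      by_cases hij : i = j
      · subst hij; rw [h0, mul_zero]
      · exact mul_nonpos_of_nonpos_of_nonneg (hA2 i j hij) (hnn j)
    linarith [ha i]
  set S : Fin d → ℝ := N *ᵥ r with hSdef
  have hS : ∀ i, 0 < S i := hNpos r hA1
  have hkN : ∀ i, 0 < (N *ᵥ k) i := hNpos k hk
  haveI : Nonempty (Fin d) := ⟨⟨0, hd⟩⟩
  obtain ⟨i0, hi0⟩ := exists_eq_ciSup_of_finite (f := fun i : Fin d => (N *ᵥ k) i / S i)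
  have hTle : ∀ i, (N *ᵥ k) i / S i ≤ ⨆ i : Fin d, (N *ᵥ k) i / S i := fun i =>
    le_ciSup (Set.finite_range fun i : Fin d => (N *ᵥ k) i / S i).bddAbove i
  generalize (⨆ i : Fin d, (N *ᵥ k) i / S i) = T at hi0 hTle ⊢
  have hT : 0 < T := by rw [← hi0]; exact div_pos (hkN i0) (hS i0)
  obtain ⟨i1, hi1⟩ := Finite.exists_min S
  have hpos0 : ∀ ε ∈ Set.Ioc (0:ℝ) 1, ∀ i, 0 < θ ε 0 i := fun ε hε i => by
    rw [hθinit ε hε i]; exact mul_pos (hC i) (Real.rpow_pos_of_pos hε.1 _)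
  -- formula for Phi
  have hPhi : ∀ ε ∈ Set.Ioc (0:ℝ) 1, ∀ t i, DLN.Phi N r (θ ε) t i =
      S i * t - (N *ᵥ k) i * Real.log (1 / ε)
        + (N *ᵥ (fun j => Real.log (C j) - Real.log (θ ε t j))) i := by
    intro ε hε t i
    have e : (fun j => Real.log (θ ε 0 j) - Real.log (θ ε t j)) =
        (fun j => Real.log (C j) - Real.log (θ ε t j)) - Real.log (1 / ε) • k := by
      funext j
      rw [hθinit ε hε j, Real.log_mul (hC j).ne' (Real.rpow_pos_of_pos hε.1 _).ne',
        Real.log_rpow hε.1]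
      simp only [one_div, Real.log_inv, Pi.sub_apply, Pi.smul_apply, smul_eq_mul]
      ring
    rw [DLN.Phi, e, Matrix.mulVec_sub, Matrix.mulVec_smul]
    simp only [Pi.sub_apply, Pi.smul_apply, smul_eq_mul]
    ring
  have hLtop : Filter.Tendsto (fun ε : ℝ => Real.log (1 / ε)) (nhdsWithin 0 (Set.Ioi 0))
      Filter.atTop := by
    simp only [one_div]
    exact Real.tendsto_log_atTop.comp tendsto_inv_nhdsGT_zero
  have hev1 : ∀ᶠ ε : ℝ in nhdsWithin 0 (Set.Ioi 0), ε ∈ Set.Ioc (0:ℝ) 1 :=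
    Ioc_mem_nhdsGT zero_lt_one
  have hev2 : ∀ᶠ ε : ℝ in nhdsWithin 0 (Set.Ioi 0), ∀ i, (M *ᵥ θ ε 0) i < r i := by
    rw [Filter.eventually_all]
    intro i
    have hlim : Filter.Tendsto (fun ε : ℝ => ∑ j, M i j * (C j * ε ^ k j))
        (nhdsWithin 0 (Set.Ioi 0)) (nhds (∑ j, M i j * (C j * (0:ℝ) ^ k j))) := by
      refine tendsto_finsetSum _ fun j _ => ?_
      exact ((((Real.continuousAt_rpow_const 0 (k j) (Or.inr (hk j).le)).tendsto).mono_left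
        nhdsWithin_le_nhds).const_mul (C j)).const_mul (M i j)
    have hz : (∑ j, M i j * (C j * (0:ℝ) ^ k j)) = 0 :=
      Finset.sum_eq_zero fun j _ => by rw [Real.zero_rpow (hk j).ne']; ring
    rw [hz] at hlim
    filter_upwards [hlim.eventually_lt_const (hA1 i), hev1] with ε h1 h2
    rw [mulVec, dotProduct]
    simp only [hθinit ε h2]
    exact h1
  refine ⟨S i1 / 2, half_pos (hS i1), fun η hη => ?_⟩
  have hη0 : 0 < η := hη.1
  -- lower bound
  set B : ℝ := (N *ᵥ (fun j => Real.log (C j) - Real.log (S j / 2))) i0 / S i0 with hB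
  have hlow : ∀ ε ∈ Set.Ioc (0:ℝ) 1, ∀ t, 0 ≤ t →
      Real.sqrt (∑ i, (θ ε t i - S i) ^ 2) ≤ η → T * Real.log (1 / ε) - B ≤ t := by
    intro ε hε t ht hdist
    have hθlow : ∀ j, S j / 2 ≤ θ ε t j := by
      intro j
      have h1 : |θ ε t j - S j| ≤ η := by
        rw [← Real.sqrt_sq_eq_abs]
        exact (Real.sqrt_le_sqrt (Finset.single_le_sum
          (f := fun i => (θ ε t i - S i) ^ 2) (fun i _ => sq_nonneg _)
          (Finset.mem_univ j))).trans hdist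
      have h2 := (abs_le.mp h1).1
      have h3 := hη.2
      have h4 := hi1 j
      linarith
    have h1 := DLN.Phi_nonneg hNM (hθode ε hε) (hpos0 ε hε) t ht i0
    rw [hPhi ε hε] at h1
    have h2 := hNmono (fun j => Real.log (C j) - Real.log (θ ε t j))
      (fun j => Real.log (C j) - Real.log (S j / 2))
      (fun j => sub_le_sub_left (Real.log_le_log (half_pos (hS j)) (hθlow j)) _) i0
    have e1 : (N *ᵥ (fun j => Real.log (C j) - Real.log (S j / 2))) i0 = B * S i0 := by
      rw [hB, div_mul_cancel₀ _ (hS i0).ne']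
    have e2 : (N *ᵥ k) i0 = T * S i0 := by
      rw [← hi0]; exact (div_mul_cancel₀ _ (hS i0).ne').symm
    rw [e1] at h2
    rw [e2] at h1
    have h3 : 0 ≤ S i0 * (t - T * Real.log (1 / ε) + B) := by linarith
    have h4 := nonneg_of_mul_nonneg_right h3 (hS i0)
    linarith
  -- upper bound
  have hup : ∀ δ > (0:ℝ), ∀ᶠ ε : ℝ in nhdsWithin 0 (Set.Ioi 0),
      Real.sqrt (∑ i, (θ ε ((T + 2 * δ) * Real.log (1 / ε)) i - S i) ^ 2) ≤ η := by
    intro δ hδ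
    set c : Fin d → ℝ := fun i => S i * δ / (2 * (T + δ)) with hc
    have hcpos : ∀ i, 0 < c i := fun i => by
      have := hS i
      simp only [hc]; positivity
    set A : Fin d → ℝ := N *ᵥ (fun j => Real.log (C j) - Real.log (S j)) with hA
    set D : Fin d → ℝ := N *ᵥ (fun j => Real.log (c j) - Real.log (S j)) with hD
    have hevA : ∀ᶠ ε : ℝ in nhdsWithin 0 (Set.Ioi 0), ∀ i,
        -A i / (S i * δ / 2) ≤ Real.log (1 / ε) := by
      rw [Filter.eventually_all]
      exact fun i => hLtop.eventually_ge_atTop _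
    have hevD : ∀ᶠ ε : ℝ in nhdsWithin 0 (Set.Ioi 0), ∀ i,
        -D i / (δ * (η / d)) ≤ Real.log (1 / ε) := by
      rw [Filter.eventually_all]
      exact fun i => hLtop.eventually_ge_atTop _
    have hd' : (0:ℝ) < d := by exact_mod_cast hd
    filter_upwards [hev1, hev2, hevA, hevD, hLtop.eventually_gt_atTop 0] with ε hε hs0 hLA hLD hL
    set L := Real.log (1 / ε) with hLdef
    have h0 := hpos0 ε hε
    have hode := hθode ε hε
    have hle : ∀ t, 0 ≤ t → ∀ i, θ ε t i ≤ S i := by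
      intro t ht i
      have h1 := hNmono (M *ᵥ θ ε t) r
        (fun i => (sub_pos.mp (DLN.drift_nonneg hNM hA2 hode h0 hs0 t ht i)).le) i
      rwa [Matrix.mulVec_mulVec, hNM, Matrix.one_mulVec] at h1
    have hpos := DLN.sol_pos hode h0
    have hs : 0 ≤ (T + δ) * L := by positivity
    have ht : 0 ≤ (T + 2 * δ) * L := by positivity
    have hst : (T + δ) * L ≤ (T + 2 * δ) * L := by nlinarith
    have hkT : ∀ i, (N *ᵥ k) i ≤ T * S i := fun i => (div_le_iff₀ (hS i)).mp (hTle i)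
    have hclow : ∀ i, c i ≤ θ ε ((T + δ) * L) i := by
      intro i
      have h1 := DLN.Phi_sub_le hNM hA2 hode h0 hs0 0 ((T + δ) * L) le_rfl hs i
      rw [DLN.Phi_zero, hPhi ε hε] at h1
      have h2 := hNmono (fun j => Real.log (C j) - Real.log (S j))
        (fun j => Real.log (C j) - Real.log (θ ε ((T + δ) * L) j))
        (fun j => sub_le_sub_left (Real.log_le_log (hpos _ hs j) (hle _ hs j)) _) i
      have h3 : -A i ≤ L * (S i * δ / 2) :=
        (div_le_iff₀ (by have := hS i; positivity)).mp (hLA i)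
      have h4 : (N *ᵥ k) i * L ≤ T * S i * L := mul_le_mul_of_nonneg_right (hkT i) hL.le
      have h5 : S i * δ / 2 * L ≤ θ ε ((T + δ) * L) i * (T + δ) * L := by
        change A i ≤ _ at h2
        rw [← hLdef] at h1
        linarith
      have h6 := le_of_mul_le_mul_right h5 hL
      simp only [hc]
      rw [div_le_iff₀ (by positivity)]
      linarith
    have hfin : ∀ i, S i - θ ε ((T + 2 * δ) * L) i ≤ η / d := by
      intro i
      have h1 := DLN.Phi_sub_le hNM hA2 hode h0 hs0 _ _ hs hst i
      have e : DLN.Phi N r (θ ε) ((T + 2 * δ) * L) i - DLN.Phi N r (θ ε) ((T + δ) * L) i =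
          (N *ᵥ (fun j => Real.log (θ ε ((T + δ) * L) j)
            - Real.log (θ ε ((T + 2 * δ) * L) j))) i + S i * (δ * L) := by
        have e' : (fun j => Real.log (θ ε ((T + δ) * L) j)
            - Real.log (θ ε ((T + 2 * δ) * L) j)) =
            (fun j => Real.log (θ ε 0 j) - Real.log (θ ε ((T + 2 * δ) * L) j)) -
            (fun j => Real.log (θ ε 0 j) - Real.log (θ ε ((T + δ) * L) j)) := by
          funext j; simp only [Pi.sub_apply]; ring
        rw [e', Matrix.mulVec_sub, DLN.Phi, DLN.Phi, Pi.sub_apply]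
        simp only [hSdef]
        ring
      rw [e] at h1
      have h2 := hNmono (fun j => Real.log (c j) - Real.log (S j))
        (fun j => Real.log (θ ε ((T + δ) * L) j) - Real.log (θ ε ((T + 2 * δ) * L) j))
        (fun j => sub_le_sub (Real.log_le_log (hcpos j) (hclow j))
          (Real.log_le_log (hpos _ ht j) (hle _ ht j))) i
      change D i ≤ _ at h2
      have h3 : -D i ≤ L * (δ * (η / d)) := (div_le_iff₀ (by positivity)).mp (hLD i)
      have h4 : (S i - θ ε ((T + 2 * δ) * L) i) * (δ * L) ≤ η / d * (δ * L) := by linarith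
      exact le_of_mul_le_mul_right h4 (by positivity)
    rw [Real.sqrt_le_left hη0.le]
    have hbd : ∑ i, (θ ε ((T + 2 * δ) * L) i - S i) ^ 2 ≤ ∑ _i : Fin d, (η / d) ^ 2 := by
      refine Finset.sum_le_sum fun i _ => ?_
      rw [← neg_sq, neg_sub]
      exact pow_le_pow_left₀ (sub_nonneg.mpr (hle _ ht i)) (hfin i) 2
    refine hbd.trans ?_
    rw [Finset.sum_const, Finset.card_univ, Fintype.card_fin, nsmul_eq_mul]
    have hd1 : (1:ℝ) ≤ d := by exact_mod_cast hd
    have e : (d:ℝ) * (η / d) ^ 2 = η ^ 2 / d := by field_simp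
    rw [e]
    exact div_le_self (sq_nonneg _) hd1
  -- conclusion
  rw [Metric.tendsto_nhds]
  intro κ hκ
  filter_upwards [hev1, hup (κ / 4) (by positivity), hLtop.eventually_gt_atTop 0,
    hLtop.eventually_ge_atTop (2 * |B| / κ)] with ε hε hin hL hLB
  set L := Real.log (1 / ε) with hLdef
  set U : Set ℝ := {t : ℝ | 0 ≤ t ∧ Real.sqrt (∑ i, (θ ε t i - S i) ^ 2) ≤ η} with hU
  have hmem : (T + 2 * (κ / 4)) * L ∈ U := ⟨by positivity, hin⟩
  have hb1 : sInf U ≤ (T + 2 * (κ / 4)) * L := csInf_le ⟨0, fun x hx => hx.1⟩ hmem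
  have hb2 : T * L - B ≤ sInf U := le_csInf ⟨_, hmem⟩ fun t ht => hlow ε hε t ht.1 ht.2
  rw [div_le_iff₀ hκ] at hLB
  rw [Real.dist_eq, abs_lt]
  have hBa := le_abs_self B
  have hκL : 0 < κ * L := by positivity
  constructor
  · rw [lt_sub_iff_add_lt, lt_div_iff₀ hL]
    linarith
  · rw [sub_lt_iff_lt_add, div_lt_iff₀ hL]
    linarith
end
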